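/- arXiv:math/0611901 — 2 statements merged into one kernel-verified Lean document; each statement's English description precedes it below -/
import Mathlib

section
/- Let n ≥ 1, n/(n+1) ≤ p ≤ 1, and set p* = pn/(n−p). Fix ψ as in the context. Let f be a tempered distribution on ℝⁿ such that for each j = 1,…,n the function x ↦ sup_{t>0} |⟨f, y ↦ t^{−n−1} (∂_j ψ)((x−y)/t)⟩| belongs to L^p(ℝⁿ). Then there exists a measurable function h : ℝⁿ → ℝ with ∫_B |h|^{p*} dm < ∞ for every ball B ⊆ ℝⁿ, such that ⟨f, φ⟩ = ∫_{ℝⁿ} h φ dm for every Schwartz function φ. In particular f is represented by a locally integrable function. -/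
open MeasureTheory Metric Set ENNReal NNReal

noncomputable section

/-- The smooth maximal function `sup_{t>0} |⟨f, y ↦ t^{-n-1}(∂_jψ)((x-y)/t)⟩|` of the
distributional derivative `D_j f` of a tempered distribution `f`. The pairing is
encoded by a supremum over the Schwartz functions whose underlying function is
`y ↦ t^{-n-1}(∂_jψ)((x-y)/t)` (there is exactly one such Schwartz function since this
function is smooth and compactly supported). -/
def distrSmoothMax (n : ℕ) (ψ : EuclideanSpace ℝ (Fin n) → ℝ)
    (f : SchwartzMap (EuclideanSpace ℝ (Fin n)) ℝ →L[ℝ] ℝ) (j : Fin n)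
    (x : EuclideanSpace ℝ (Fin n)) : ℝ≥0∞ :=
  ⨆ (t : {s : ℝ // 0 < s}),
    ⨆ (φ : {φ : SchwartzMap (EuclideanSpace ℝ (Fin n)) ℝ //
        ∀ y, φ y = (t.1⁻¹) ^ (n + 1) *
          fderiv ℝ ψ (t.1⁻¹ • (x - y)) (EuclideanSpace.single j 1)}),
      ENNReal.ofReal |f φ.1|


open Filter Topology
open scoped ContDiff

/-- Euclidean space. -/
abbrev Eu (n : ℕ) := EuclideanSpace ℝ (Fin n)

/-- Real Schwartz functions. -/
abbrev Sw (n : ℕ) := SchwartzMap (Eu n) ℝ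

/-- Differentiation under the integral sign, to all orders. -/
lemma contDiff_integral_aux {E : Type} [NormedAddCommGroup E] [NormedSpace ℝ E]
    {Ω : Type} [MeasurableSpace Ω] {μ : Measure Ω} (w : Ω → ℝ) (m : ℕ) :
    ∀ {F : Type} [NormedAddCommGroup F] [NormedSpace ℝ F] [CompleteSpace F] (Φ : Ω → E → F)
      (_ : ∀ y, ContDiff ℝ ∞ (Φ y))
      (_ : ∀ (i : ℕ) z, AEStronglyMeasurable (fun y => w y • iteratedFDeriv ℝ i (Φ y) z) μ)
      (b : ℕ → Ω → ℝ) (_ : ∀ i, Integrable (b i) μ)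
      (_ : ∀ (i : ℕ) y z, ‖w y • iteratedFDeriv ℝ i (Φ y) z‖ ≤ b i y),
      ContDiff ℝ m (fun z => ∫ y, w y • Φ y z ∂μ) ∧
      ∀ z, iteratedFDeriv ℝ m (fun z => ∫ y, w y • Φ y z ∂μ) z =
        ∫ y, w y • iteratedFDeriv ℝ m (Φ y) z ∂μ := by
  induction m with
  | zero =>
    intro F _ _ _ Φ hΦ hmeas b hb hbd
    have hm0 : ∀ z, AEStronglyMeasurable (fun y => w y • Φ y z) μ := by
      intro z
      have := (continuousMultilinearCurryFin0 ℝ E F).continuous.comp_aestronglyMeasurable (hmeas 0 z)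
      refine this.congr (Eventually.of_forall fun y => ?_)
      simp [iteratedFDeriv_zero_eq_comp]
    have hb0 : ∀ y z, ‖w y • Φ y z‖ ≤ b 0 y := by
      intro y z
      have := hbd 0 y z
      rwa [norm_smul, norm_iteratedFDeriv_zero, ← norm_smul] at this
    refine ⟨?_, fun z => ?_⟩
    · refine contDiff_zero.2 (continuous_of_dominated hm0 (fun z => Eventually.of_forall fun y => hb0 y z)
        (hb 0) (Eventually.of_forall fun y => ?_))
      exact continuous_const.smul (hΦ y).continuous
    · simp only [iteratedFDeriv_zero_eq_comp, Function.comp]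
      exact (ContinuousLinearEquiv.integral_comp_comm
        (continuousMultilinearCurryFin0 ℝ E F).symm.toContinuousLinearEquiv
        (fun y => w y • Φ y z)).symm.trans (by simp)
  | succ m ih =>
    intro F _ _ _ Φ hΦ hmeas b hb hbd
    have hm0 : ∀ z, AEStronglyMeasurable (fun y => w y • Φ y z) μ := by
      intro z
      have := (continuousMultilinearCurryFin0 ℝ E F).continuous.comp_aestronglyMeasurable (hmeas 0 z)
      refine this.congr (Eventually.of_forall fun y => ?_)
      simp [iteratedFDeriv_zero_eq_comp]
    have hb0 : ∀ y z, ‖w y • Φ y z‖ ≤ b 0 y := by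
      intro y z
      have := hbd 0 y z
      rwa [norm_smul, norm_iteratedFDeriv_zero, ← norm_smul] at this
    set Φ' : Ω → E → (E →L[ℝ] F) := fun y => fderiv ℝ (Φ y) with hΦ'
    have hrel : ∀ (i : ℕ) y z, w y • iteratedFDeriv ℝ i (Φ' y) z =
        continuousMultilinearCurryRightEquiv' ℝ i E F (w y • iteratedFDeriv ℝ (i+1) (Φ y) z) := by
      intro i y z
      rw [iteratedFDeriv_succ_eq_comp_right]
      simp [hΦ']
    have h1 : ∀ y, ContDiff ℝ ∞ (Φ' y) := fun y => (hΦ y).fderiv_right (by simp)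
    have h2 : ∀ (i : ℕ) z, AEStronglyMeasurable (fun y => w y • iteratedFDeriv ℝ i (Φ' y) z) μ := by
      intro i z
      simp only [hrel]
      exact (LinearIsometryEquiv.continuous _).comp_aestronglyMeasurable (hmeas (i+1) z)
    have h3 : ∀ (i : ℕ) y z, ‖w y • iteratedFDeriv ℝ i (Φ' y) z‖ ≤ b (i+1) y := by
      intro i y z
      rw [hrel, LinearIsometryEquiv.norm_map]
      exact hbd (i+1) y z
    obtain ⟨hc, hi⟩ := ih Φ' h1 h2 (fun i => b (i+1)) (fun i => hb (i+1)) h3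
    have hm1 : ∀ z, AEStronglyMeasurable (fun y => w y • Φ' y z) μ := by
      intro z
      have := (continuousMultilinearCurryFin0 ℝ E (E →L[ℝ] F)).continuous.comp_aestronglyMeasurable (h2 0 z)
      refine this.congr (Eventually.of_forall fun y => ?_)
      simp [iteratedFDeriv_zero_eq_comp]
    have hb1 : ∀ y z, ‖w y • Φ' y z‖ ≤ b 1 y := by
      intro y z
      have := h3 0 y z
      rwa [norm_smul, norm_iteratedFDeriv_zero, ← norm_smul] at this
    have hd : ∀ z, HasFDerivAt (fun z => ∫ y, w y • Φ y z ∂μ) (∫ y, w y • Φ' y z ∂μ) z := by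
      intro z
      refine hasFDerivAt_integral_of_dominated_of_fderiv_le (F := fun z y => w y • Φ y z)
        (F' := fun z y => w y • Φ' y z) (bound := b 1) (s := univ) univ_mem
        (Eventually.of_forall hm0) ?_ (hm1 z) (Eventually.of_forall fun y z _ => hb1 y z) (hb 1)
        (Eventually.of_forall fun y z _ => ?_)
      · exact (hb 0).mono' (hm0 z) (Eventually.of_forall fun y => hb0 y z)
      · exact (((hΦ y).differentiable (by simp)).differentiableAt.hasFDerivAt).const_smul (w y)
    have hfd : fderiv ℝ (fun z => ∫ y, w y • Φ y z ∂μ) = fun z => ∫ y, w y • Φ' y z ∂μ :=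
      funext fun z => (hd z).fderiv
    refine ⟨?_, fun z => ?_⟩
    · have : ((m + 1 : ℕ) : WithTop ℕ∞) = (m : WithTop ℕ∞) + 1 := by push_cast; rfl
      rw [this, contDiff_succ_iff_fderiv]
      refine ⟨fun z => (hd z).differentiableAt, by simp, ?_⟩
      rw [hfd]; exact hc
    · rw [iteratedFDeriv_succ_eq_comp_right, hfd]
      simp only [Function.comp]
      rw [hi]
      have : ∀ y, iteratedFDeriv ℝ m (Φ' y) z = continuousMultilinearCurryRightEquiv' ℝ m E F
          (iteratedFDeriv ℝ (m+1) (Φ y) z) := by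
        intro y; rw [iteratedFDeriv_succ_eq_comp_right]; simp [hΦ']
      refine (ContinuousLinearEquiv.integral_comp_comm
        (continuousMultilinearCurryRightEquiv' ℝ m E F).symm.toContinuousLinearEquiv
        (fun y => w y • iteratedFDeriv ℝ m (Φ' y) z)).symm.trans ?_
      simp [this]

/-- Coordinates of the embedding of Schwartz space into bounded continuous functions. -/
def swCoord₀ (n k m : ℕ) : Sw n →L[ℝ] BoundedContinuousFunction (Eu n) (Eu n [×m]→L[ℝ] ℝ) :=
  SchwartzMap.mkCLMtoNormedSpace (𝕜 := ℝ) (𝕜' := ℝ) (σ := RingHom.id ℝ)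
    (fun φ => BoundedContinuousFunction.ofNormedAddCommGroup
      (fun z => ‖z‖ ^ k • iteratedFDeriv ℝ m φ z)
      (by
        have := (φ.smooth ⊤).continuous_iteratedFDeriv (m := m) (by exact_mod_cast le_top)
        fun_prop)
      (SchwartzMap.seminorm ℝ k m φ)
      (fun z => by
        rw [norm_smul, norm_pow, norm_norm]
        exact SchwartzMap.le_seminorm ℝ k m φ z))
    (fun φ η => by
      ext1 z
      have h1 := ((φ.smooth ⊤).of_le (m := m) (by exact_mod_cast le_top)).contDiffAt (x := z)
      have h2 := ((η.smooth ⊤).of_le (m := m) (by exact_mod_cast le_top)).contDiffAt (x := z)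
      simp only [BoundedContinuousFunction.coe_ofNormedAddCommGroup, BoundedContinuousFunction.coe_add,
        Pi.add_apply]
      rw [← smul_add, ← iteratedFDeriv_add_apply h1 h2]
      rfl)
    (fun c φ => by
      ext1 z
      have h1 := ((φ.smooth ⊤).of_le (m := m) (by exact_mod_cast le_top)).contDiffAt (x := z)
      simp only [BoundedContinuousFunction.coe_ofNormedAddCommGroup, BoundedContinuousFunction.coe_smul,
        RingHom.id_apply]
      rw [smul_comm, ← iteratedFDeriv_const_smul_apply h1]
      rfl)
    ⟨{(k, m)}, 1, zero_le_one, fun φ => by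
      refine (BoundedContinuousFunction.norm_ofNormedAddCommGroup_le _ (apply_nonneg _ _) _).trans ?_
      simp [SchwartzMap.schwartzSeminormFamily_apply]⟩

/-- The target Banach space of the coordinates. -/
def YB (n m : ℕ) : Type := BoundedContinuousFunction (Eu n) (Eu n [×m]→L[ℝ] ℝ)

instance (n m : ℕ) : NormedAddCommGroup (YB n m) :=
  inferInstanceAs (NormedAddCommGroup (BoundedContinuousFunction (Eu n) (Eu n [×m]→L[ℝ] ℝ)))

instance (n m : ℕ) : NormedSpace ℝ (YB n m) :=
  inferInstanceAs (NormedSpace ℝ (BoundedContinuousFunction (Eu n) (Eu n [×m]→L[ℝ] ℝ)))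

instance (n m : ℕ) : CompleteSpace (YB n m) :=
  inferInstanceAs (CompleteSpace (BoundedContinuousFunction (Eu n) (Eu n [×m]→L[ℝ] ℝ)))

/-- Evaluation at a point. -/
def evY (n m : ℕ) (z : Eu n) : YB n m →L[ℝ] (Eu n [×m]→L[ℝ] ℝ) :=
  BoundedContinuousFunction.evalCLM ℝ z

lemma YB_ext {n m : ℕ} {a b : YB n m} (h : ∀ z, evY n m z a = evY n m z b) : a = b :=
  BoundedContinuousFunction.ext h

lemma evY_norm_le {n m : ℕ} (a : YB n m) (z : Eu n) : ‖evY n m z a‖ ≤ ‖a‖ :=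
  BoundedContinuousFunction.norm_coe_le_norm (α := Eu n) (β := Eu n [×m]→L[ℝ] ℝ) a z

lemma YB_norm_le {n m : ℕ} (a : YB n m) {C : ℝ} (hC : 0 ≤ C) (h : ∀ z, ‖evY n m z a‖ ≤ C) :
    ‖a‖ ≤ C :=
  (BoundedContinuousFunction.norm_le (α := Eu n) (β := Eu n [×m]→L[ℝ] ℝ) hC).2 h

/-- Coordinates, with the target renamed. -/
def swCoord (n k m : ℕ) : Sw n →L[ℝ] YB n m := swCoord₀ n k m

lemma swCoord_apply (n k m : ℕ) (φ : Sw n) (z : Eu n) :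
    evY n m z (swCoord n k m φ) = ‖z‖ ^ k • iteratedFDeriv ℝ m φ z := rfl

lemma swCoord_norm_le (n k m : ℕ) (φ : Sw n) :
    ‖swCoord n k m φ‖ ≤ SchwartzMap.seminorm ℝ k m φ := by
  refine YB_norm_le _ (apply_nonneg _ _) fun z => ?_
  rw [swCoord_apply, norm_smul, norm_pow, norm_norm]
  exact SchwartzMap.le_seminorm ℝ k m φ z

lemma seminorm_le_swCoord_norm (n k m : ℕ) (φ : Sw n) :
    SchwartzMap.seminorm ℝ k m φ ≤ ‖swCoord n k m φ‖ := by
  refine SchwartzMap.seminorm_le_bound ℝ k m φ (norm_nonneg _) fun z => ?_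
  have := evY_norm_le (swCoord n k m φ) z
  rwa [swCoord_apply, norm_smul, norm_pow, norm_norm] at this

/-- A continuous functional on Schwartz space factors through a Banach space. -/
lemma exists_factor {n : ℕ} (g : Sw n →L[ℝ] ℝ) :
    ∃ (s : Finset (ℕ × ℕ))
      (G : (∀ i : s, YB n i.1.2) →L[ℝ] ℝ),
      ∀ φ, g φ = G (fun i => swCoord n i.1.1 i.1.2 φ) := by
  obtain ⟨s₀, C, -, hC⟩ := Seminorm.bound_of_continuous (schwartz_withSeminorms ℝ (Eu n) ℝ)
    ((normSeminorm ℝ ℝ).comp g.toLinearMap) (by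
      exact continuous_norm.comp g.continuous)
  set s := insert (0, 0) s₀ with hs
  let X := ∀ i : s, YB n i.1.2
  let ι : Sw n →ₗ[ℝ] X := LinearMap.pi fun i : s => (swCoord n i.1.1 i.1.2).toLinearMap
  have hι : ∀ φ i, ι φ i = swCoord n i.1.1 i.1.2 φ := fun _ _ => rfl
  have hsem : ∀ φ, ∀ i ∈ s, SchwartzMap.seminorm ℝ i.1 i.2 φ ≤ ‖ι φ‖ := by
    intro φ i hi
    exact (seminorm_le_swCoord_norm n i.1 i.2 φ).trans (norm_le_pi_norm (ι φ) ⟨i, hi⟩)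
  have hinj : Function.Injective ι := by
    rw [← LinearMap.ker_eq_bot, LinearMap.ker_eq_bot']
    intro φ h
    have h0 := hsem φ (0, 0) (Finset.mem_insert_self _ _)
    rw [h, norm_zero] at h0
    ext z
    have := SchwartzMap.norm_le_seminorm ℝ φ z
    simpa using this.trans h0
  have hbound : ∀ φ, ‖g φ‖ ≤ C * ‖ι φ‖ := by
    intro φ
    refine (hC φ).trans ?_
    rw [smul_apply]
    refine mul_le_mul_of_nonneg_left ?_ C.2
    refine Seminorm.finset_sup_apply_le (norm_nonneg _) fun i hi => ?_
    exact hsem φ i (Finset.mem_insert_of_mem hi)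
  let e := LinearEquiv.ofInjective ι hinj
  let g₁ : LinearMap.range ι →L[ℝ] ℝ := LinearMap.mkContinuous (g.toLinearMap ∘ₗ e.symm.toLinearMap) C
    (by
      rintro ⟨_, φ, rfl⟩
      have : e.symm ⟨ι φ, φ, rfl⟩ = φ := by
        apply e.injective; simp [e]; rfl
      simp only [LinearMap.comp_apply, LinearEquiv.coe_coe]
      erw [this]
      exact hbound φ)
  obtain ⟨G, hG, -⟩ := exists_extension_norm_eq (LinearMap.range ι) g₁
  refine ⟨s, G, fun φ => ?_⟩
  have h := hG ⟨ι φ, φ, rfl⟩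
  have h2 : e.symm ⟨ι φ, φ, rfl⟩ = φ := by
    apply e.injective; simp [e]; rfl
  have h3 : g₁ ⟨ι φ, φ, rfl⟩ = g φ := by
    simp only [g₁, LinearMap.mkContinuous_apply, LinearMap.comp_apply, LinearEquiv.coe_coe]
    erw [h2]; rfl
  rw [← h3, ← h]; rfl

/-- A tempered distribution commutes with integrals of Schwartz functions. -/
lemma interchange {n : ℕ} {Ω : Type} [TopologicalSpace Ω] [SecondCountableTopology Ω]
    [MeasurableSpace Ω] [OpensMeasurableSpace Ω] (μ : Measure Ω)
    (g : Sw n →L[ℝ] ℝ) (Φ : Ω → Sw n) (hΦ : Continuous Φ) (w : Ω → ℝ) (hw : Measurable w)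
    (θ : Sw n) (hθ : ∀ z, θ z = ∫ y, w y * Φ y z ∂μ)
    (hintg : ∀ k m, Integrable (fun y => ‖w y‖ * SchwartzMap.seminorm ℝ k m (Φ y)) μ) :
    g θ = ∫ y, w y * g (Φ y) ∂μ := by
  obtain ⟨s, G, hG⟩ := exists_factor g
  let X := ∀ i : s, YB n i.1.2
  let ι : Ω → X := fun y i => swCoord n i.1.1 i.1.2 (Φ y)
  have hc : ∀ k m, Continuous fun y => swCoord n k m (Φ y) :=
    fun k m => (swCoord n k m).continuous.comp hΦ
  have hιc : Continuous ι := continuous_pi fun i => hc _ _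
  have hcoord : ∀ k m, Integrable (fun y => w y • swCoord n k m (Φ y)) μ := by
    intro k m
    refine (hintg k m).mono' (hw.aestronglyMeasurable.smul (hc k m).aestronglyMeasurable) ?_
    refine Eventually.of_forall fun y => ?_
    rw [norm_smul]
    exact mul_le_mul_of_nonneg_left (swCoord_norm_le n k m _) (norm_nonneg _)
  have hι : Integrable (fun y => w y • ι y) μ := by
    exact Integrable.of_eval fun i => hcoord i.1.1 i.1.2
  have hev : ∀ m z, AEStronglyMeasurable (fun y => w y • iteratedFDeriv ℝ m (Φ y) z) μ := by
    intro m z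
    have h1 : Continuous fun y => evY n m z (swCoord n 0 m (Φ y)) :=
      (evY n _ z).continuous.comp (hc 0 m)
    simp only [swCoord_apply, pow_zero, one_smul] at h1
    exact hw.aestronglyMeasurable.smul h1.aestronglyMeasurable
  have key : ∀ m z, iteratedFDeriv ℝ m θ z = ∫ y, w y • iteratedFDeriv ℝ m (Φ y) z ∂μ := by
    intro m z
    have h := (contDiff_integral_aux (μ := μ) w m (fun y => (Φ y : Eu n → ℝ))
      (fun y => (Φ y).smooth ⊤) hev (fun i y => ‖w y‖ * SchwartzMap.seminorm ℝ 0 i (Φ y))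
      (fun i => hintg 0 i) (fun i y z => by
        rw [norm_smul]
        exact mul_le_mul_of_nonneg_left (SchwartzMap.norm_iteratedFDeriv_le_seminorm ℝ _ i z)
          (norm_nonneg _))).2 z
    rw [← h]
    congr 1
    ext z
    simp [hθ z]
  have hmain : (fun i : s => swCoord n i.1.1 i.1.2 θ) = ∫ y, w y • ι y ∂μ := by
    ext1 i
    rw [MeasureTheory.eval_integral (f := fun y => w y • ι y) (fun i : s => hcoord i.1.1 i.1.2)]
    refine YB_ext fun z => ?_
    have h1 := (evY n _ z).integral_comp_comm (hcoord i.1.1 i.1.2)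
    simp only [map_smul, swCoord_apply] at h1
    refine Eq.trans ?_ h1
    rw [swCoord_apply, key, ← integral_smul]
    congr 1
    ext1 y
    rw [smul_comm]
  rw [hG, hmain, ← G.integral_comp_comm hι]
  congr 1
  ext1 y
  rw [map_smul, hG]
  rfl

/-- Reflected translate: `Tr x φ y = φ (x - y)`. -/
def Tr {n : ℕ} (x : Eu n) (φ : Sw n) : Sw n :=
  SchwartzMap.compSubConstCLM ℝ x
    (SchwartzMap.compCLMOfContinuousLinearEquiv ℝ (ContinuousLinearEquiv.neg ℝ) φ)

lemma Tr_apply {n : ℕ} (x : Eu n) (φ : Sw n) (y : Eu n) : Tr x φ y = φ (x - y) := by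
  simp [Tr]

lemma Tr_add {n : ℕ} (x : Eu n) (φ η : Sw n) : Tr x (φ + η) = Tr x φ + Tr x η := by
  ext y; simp [Tr_apply]

lemma Tr_sub {n : ℕ} (x : Eu n) (φ η : Sw n) : Tr x (φ - η) = Tr x φ - Tr x η := by
  ext y; simp [Tr_apply]

lemma Tr_smul {n : ℕ} (x : Eu n) (c : ℝ) (φ : Sw n) : Tr x (c • φ) = c • Tr x φ := by
  ext y; simp [Tr_apply]

lemma Tr_sum {n : ℕ} (x : Eu n) {ι : Type} (s : Finset ι) (φ : ι → Sw n) :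
    Tr x (∑ i ∈ s, φ i) = ∑ i ∈ s, Tr x (φ i) := by
  unfold Tr; rw [map_sum, map_sum]

lemma Tr_iteratedFDeriv {n : ℕ} (x : Eu n) (φ : Sw n) (m : ℕ) (z : Eu n) :
    iteratedFDeriv ℝ m (Tr x φ) z = (-1 : ℝ) ^ m • iteratedFDeriv ℝ m φ (x - z) := by
  have h : (Tr x φ : Eu n → ℝ) = fun y => (fun t => φ (-t)) (y - x) := by
    ext y; simp [Tr_apply]
  rw [h]
  have h2 := iteratedFDeriv_comp_sub (𝕜 := ℝ) (f := fun t => φ (-t)) m x z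
  have h3 := congrFun (iteratedFDeriv_comp_const_smul (𝕜 := ℝ) (-1 : ℝ) (φ.smooth m)) (z - x)
  simp only [neg_one_smul, neg_sub] at h3
  rw [h2, h3]

/-- Weighted decay of derivatives. -/
def Dec {n : ℕ} (k m : ℕ) (φ : Sw n) (c : ℝ) : Prop :=
  ∀ z, (1 + ‖z‖) ^ k * ‖iteratedFDeriv ℝ m φ z‖ ≤ c

lemma Dec.nonneg {n k m : ℕ} {φ : Sw n} {c : ℝ} (h : Dec k m φ c) : 0 ≤ c :=
  le_trans (by positivity) (h 0)

lemma Dec.mono {n k m : ℕ} {φ : Sw n} {c c' : ℝ} (h : Dec k m φ c) (hc : c ≤ c') : Dec k m φ c' :=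
  fun z => (h z).trans hc

lemma exists_Dec {n : ℕ} (k m : ℕ) (φ : Sw n) : ∃ c, Dec k m φ c :=
  ⟨_, fun z => SchwartzMap.one_add_le_sup_seminorm_apply (𝕜 := ℝ) (m := (k, m)) le_rfl le_rfl φ z⟩

lemma weight_sub {n : ℕ} (k : ℕ) (x y : Eu n) :
    (1 + ‖x‖) ^ k ≤ (1 + ‖y‖) ^ k * (1 + ‖x - y‖) ^ k := by
  rw [← mul_pow]
  gcongr
  have : ‖x‖ ≤ ‖y‖ + ‖x - y‖ := by simpa using norm_add_le y (x - y)
  nlinarith [norm_nonneg y, norm_nonneg (x - y)]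

lemma Dec.seminorm_le {n k m : ℕ} {φ : Sw n} {c : ℝ} (h : Dec k m φ c) :
    SchwartzMap.seminorm ℝ k m φ ≤ c := by
  refine SchwartzMap.seminorm_le_bound ℝ k m φ h.nonneg fun z => (le_trans ?_ (h z))
  gcongr; linarith

lemma Dec.seminorm_Tr_le {n k m : ℕ} {φ : Sw n} {c : ℝ} (h : Dec k m φ c) (x : Eu n) :
    SchwartzMap.seminorm ℝ k m (Tr x φ) ≤ (1 + ‖x‖) ^ k * c := by
  refine SchwartzMap.seminorm_le_bound ℝ k m _ (mul_nonneg (by positivity) h.nonneg) fun z => ?_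
  rw [Tr_iteratedFDeriv, norm_smul]
  simp only [norm_pow, norm_neg, norm_one, one_pow, one_mul]
  have h1 : ‖z‖ ^ k ≤ (1 + ‖x‖) ^ k * (1 + ‖x - z‖) ^ k := by
    have := weight_sub k z x
    rw [norm_sub_rev z x] at this
    refine le_trans ?_ this
    gcongr; linarith
  calc ‖z‖ ^ k * ‖iteratedFDeriv ℝ m φ (x - z)‖
      ≤ ((1 + ‖x‖) ^ k * (1 + ‖x - z‖) ^ k) * ‖iteratedFDeriv ℝ m φ (x - z)‖ := by gcongr
    _ = (1 + ‖x‖) ^ k * ((1 + ‖x - z‖) ^ k * ‖iteratedFDeriv ℝ m φ (x - z)‖) := by ring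
    _ ≤ _ := by gcongr; exact h _

lemma Dec.mvt {n k m : ℕ} {φ : Sw n} {c : ℝ} (h : Dec k (m+1) φ c) (a b : Eu n)
    (hab : ‖a - b‖ ≤ 1) :
    (1 + ‖a‖) ^ k * ‖iteratedFDeriv ℝ m φ a - iteratedFDeriv ℝ m φ b‖ ≤ 2 ^ k * c * ‖a - b‖ := by
  have hd : Differentiable ℝ (iteratedFDeriv ℝ m φ) :=
    (φ.smooth ⊤).differentiable_iteratedFDeriv (by exact_mod_cast WithTop.coe_lt_top m)
  have key := (convex_closedBall a 1).norm_image_sub_le_of_norm_fderiv_le (𝕜 := ℝ)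
    (f := iteratedFDeriv ℝ m φ) (C := 2 ^ k * c / (1 + ‖a‖) ^ k) (x := b) (y := a)
    (fun z _ => hd z) (fun z hz => ?_) (by simpa [dist_eq_norm, norm_sub_rev] using hab) (by simp)
  · rw [div_mul_eq_mul_div, le_div_iff₀ (by positivity)] at key
    linarith
  · rw [norm_fderiv_iteratedFDeriv, le_div_iff₀ (by positivity)]
    have h1 := weight_sub k a z
    have h2 : (1 + ‖a - z‖) ^ k ≤ 2 ^ k := by
      gcongr
      have : ‖a - z‖ ≤ 1 := by simpa [dist_eq_norm, norm_sub_rev] using hz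
      linarith
    calc ‖iteratedFDeriv ℝ (m+1) φ z‖ * (1 + ‖a‖) ^ k
        ≤ ‖iteratedFDeriv ℝ (m+1) φ z‖ * ((1 + ‖z‖) ^ k * 2 ^ k) := by
          gcongr; exact h1.trans (by gcongr)
      _ = 2 ^ k * ((1 + ‖z‖) ^ k * ‖iteratedFDeriv ℝ (m+1) φ z‖) := by ring
      _ ≤ _ := by gcongr; exact h z

lemma continuous_Tr {n : ℕ} (φ : Sw n) : Continuous fun x : Eu n => Tr x φ := by
  rw [continuous_iff_continuousAt]
  intro x₀
  refine ((schwartz_withSeminorms ℝ (Eu n) ℝ).tendsto_nhds _ _).2 fun i ε hε => ?_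
  obtain ⟨k, m⟩ := i
  obtain ⟨c, hc⟩ := exists_Dec k (m+1) φ
  have hc0 := hc.nonneg
  set K := (1 + ‖x₀‖) ^ k * (2 ^ k * (2 ^ k * c)) with hK
  have hK0 : 0 ≤ K := by positivity
  have hev : ∀ᶠ x in 𝓝 x₀, ‖x - x₀‖ < min 1 (ε / (K + 1)) := by
    have : Tendsto (fun x => ‖x - x₀‖) (𝓝 x₀) (𝓝 ‖x₀ - x₀‖) := by
      apply Continuous.tendsto; fun_prop
    rw [sub_self, norm_zero] at this
    exact this.eventually_lt_const (by positivity)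
  filter_upwards [hev] with x hx
  have hx1 := hx.trans_le (min_le_left _ _)
  have hx2 := hx.trans_le (min_le_right _ _)
  have : SchwartzMap.seminorm ℝ k m (Tr x φ - Tr x₀ φ) ≤ K * ‖x - x₀‖ := by
    refine SchwartzMap.seminorm_le_bound ℝ k m _ (by positivity) fun z => ?_
    have e1 : iteratedFDeriv ℝ m (Tr x φ - Tr x₀ φ : Sw n) z =
        (-1 : ℝ) ^ m • (iteratedFDeriv ℝ m φ (x - z) - iteratedFDeriv ℝ m φ (x₀ - z)) := by
      rw [smul_sub, ← Tr_iteratedFDeriv, ← Tr_iteratedFDeriv, ← iteratedFDeriv_sub_apply]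
      · rfl
      · exact ((Tr x φ).smooth m).contDiffAt
      · exact ((Tr x₀ φ).smooth m).contDiffAt
    rw [e1, norm_smul]
    simp only [norm_pow, norm_neg, norm_one, one_pow, one_mul]
    have h1 := hc.mvt (x - z) (x₀ - z) (by simpa using hx1.le)
    have h2 : ‖z‖ ^ k ≤ (1 + ‖x₀‖) ^ k * (2 ^ k * (1 + ‖x - z‖) ^ k) := by
      have h3 := weight_sub k z x
      have h4 := weight_sub k x x₀
      rw [norm_sub_rev z x] at h3
      have h5 : (1 + ‖x - x₀‖) ^ k ≤ 2 ^ k := by gcongr; linarith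
      calc ‖z‖ ^ k ≤ (1 + ‖z‖) ^ k := by gcongr; linarith
        _ ≤ _ := h3
        _ ≤ ((1 + ‖x₀‖) ^ k * 2 ^ k) * (1 + ‖x - z‖) ^ k := by
          gcongr; exact h4.trans (by gcongr)
        _ = _ := by ring
    have h6 : x - z - (x₀ - z) = x - x₀ := by abel
    rw [h6] at h1
    set d := ‖iteratedFDeriv ℝ m φ (x - z) - iteratedFDeriv ℝ m φ (x₀ - z)‖
    calc ‖z‖ ^ k * d ≤ (1 + ‖x₀‖) ^ k * (2 ^ k * (1 + ‖x - z‖) ^ k) * d := by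
          gcongr
      _ = (1 + ‖x₀‖) ^ k * (2 ^ k * ((1 + ‖x - z‖) ^ k * d)) := by ring
      _ ≤ (1 + ‖x₀‖) ^ k * (2 ^ k * (2 ^ k * c * ‖x - x₀‖)) := by gcongr
      _ = _ := by rw [hK]; ring
  refine this.trans_lt ?_
  rw [lt_div_iff₀ (by positivity)] at hx2
  nlinarith [norm_nonneg (x - x₀)]

lemma integrable_weight {n : ℕ} (k : ℕ) (χ : Sw n) :
    Integrable (fun y => (1 + ‖y‖) ^ k * ‖χ y‖) := by
  have h1 : Integrable (fun y => 2 ^ k * (‖χ y‖ + ‖y‖ ^ k * ‖χ y‖)) :=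
    ((χ.integrable).norm.add (χ.integrable_pow_mul volume k)).const_mul _
  refine h1.mono' (by have := χ.continuous; fun_prop) (Eventually.of_forall fun y => ?_)
  rw [Real.norm_of_nonneg (by positivity)]
  have : (1 + ‖y‖) ^ k ≤ 2 ^ k * (1 + ‖y‖ ^ k) := by
    have := add_pow_le (zero_le_one) (norm_nonneg y) k
    refine this.trans ?_
    rw [one_pow]
    gcongr
    · norm_num
    · omega
  calc _ ≤ 2 ^ k * (1 + ‖y‖ ^ k) * ‖χ y‖ := by gcongr
    _ = _ := by ring

lemma conv_aux {n : ℕ} (χ φ : Sw n) (m : ℕ) :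
    ContDiff ℝ m (fun z => ∫ y, χ y * φ (z - y)) ∧
      ∀ z, iteratedFDeriv ℝ m (fun z => ∫ y, χ y * φ (z - y)) z =
        ∫ y, χ y • iteratedFDeriv ℝ m φ (z - y) := by
  have hD : ∀ (i : ℕ) y z, iteratedFDeriv ℝ i (fun z => φ (z - y)) z = iteratedFDeriv ℝ i φ (z - y) :=
    fun i y z => iteratedFDeriv_comp_sub i y z
  have := contDiff_integral_aux (μ := volume) χ m (fun y z => φ (z - y))
    (fun y => (φ.smooth ⊤).comp (contDiff_id.sub contDiff_const))
    (fun i z => by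
      simp only [hD]
      have h1 := (φ.smooth ⊤).continuous_iteratedFDeriv (m := i) (by exact_mod_cast le_top)
      have h2 := χ.continuous
      exact (Continuous.smul h2 (h1.comp (by fun_prop))).aestronglyMeasurable)
    (fun i y => ‖χ y‖ * SchwartzMap.seminorm ℝ 0 i φ)
    (fun i => χ.integrable.norm.mul_const _)
    (fun i y z => by
      rw [hD, norm_smul]
      gcongr
      exact SchwartzMap.norm_iteratedFDeriv_le_seminorm ℝ φ i _)
  simpa only [hD, smul_eq_mul] using this

lemma conv_bound {n : ℕ} {χ φ : Sw n} {k m : ℕ} {c : ℝ} (h : Dec k m φ c) (z : Eu n) :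
    (1 + ‖z‖) ^ k * ‖∫ y, χ y • iteratedFDeriv ℝ m φ (z - y)‖ ≤
      (∫ y, (1 + ‖y‖) ^ k * ‖χ y‖) * c := by
  have h0 : ‖∫ y, χ y • iteratedFDeriv ℝ m φ (z - y)‖ ≤
      ∫ y, ((1 + ‖y‖) ^ k * ‖χ y‖) * (c / (1 + ‖z‖) ^ k) := by
    refine norm_integral_le_of_norm_le ((integrable_weight k χ).mul_const _)
      (Eventually.of_forall fun y => ?_)
    rw [norm_smul, ← mul_div_assoc, le_div_iff₀ (by positivity)]
    calc ‖χ y‖ * ‖iteratedFDeriv ℝ m φ (z - y)‖ * (1 + ‖z‖) ^ k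
        ≤ ‖χ y‖ * ‖iteratedFDeriv ℝ m φ (z - y)‖ * ((1 + ‖y‖) ^ k * (1 + ‖z - y‖) ^ k) := by
          gcongr; exact weight_sub k z y
      _ = (1 + ‖y‖) ^ k * ‖χ y‖ * ((1 + ‖z - y‖) ^ k * ‖iteratedFDeriv ℝ m φ (z - y)‖) := by ring
      _ ≤ _ := by gcongr; exact h _
  rw [integral_mul_const, ← mul_div_assoc, le_div_iff₀ (by positivity)] at h0
  linarith

/-- Convolution of Schwartz functions. -/
def Sc {n : ℕ} (χ φ : Sw n) : Sw n where
  toFun z := ∫ y, χ y * φ (z - y)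
  smooth' := contDiff_infty.2 fun m => (conv_aux χ φ m).1
  decay' k m := by
    obtain ⟨c, hc⟩ := exists_Dec k m φ
    refine ⟨(∫ y, (1 + ‖y‖) ^ k * ‖χ y‖) * c, fun z => ?_⟩
    rw [(conv_aux χ φ m).2]
    refine le_trans ?_ (conv_bound hc z)
    gcongr; linarith

lemma Sc_apply {n : ℕ} (χ φ : Sw n) (z : Eu n) : Sc χ φ z = ∫ y, χ y * φ (z - y) := rfl

lemma Sc_iteratedFDeriv {n : ℕ} (χ φ : Sw n) (m : ℕ) (z : Eu n) :
    iteratedFDeriv ℝ m (Sc χ φ) z = ∫ y, χ y • iteratedFDeriv ℝ m φ (z - y) :=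
  (conv_aux χ φ m).2 z

lemma Dec.conv {n : ℕ} {φ : Sw n} {k m : ℕ} {c : ℝ} (h : Dec k m φ c) (χ : Sw n) :
    Dec k m (Sc χ φ) ((∫ y, (1 + ‖y‖) ^ k * ‖χ y‖) * c) := fun z => by
  rw [Sc_iteratedFDeriv]; exact conv_bound h z

lemma Sc_comm {n : ℕ} (χ φ : Sw n) : Sc χ φ = Sc φ χ := by
  ext z
  rw [Sc_apply, Sc_apply, ← integral_sub_left_eq_self (fun y => χ y * φ (z - y)) volume z]
  congr 1; ext y
  have : z - (z - y) = y := by abel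
  simp only [this]
  rw [mul_comm]

lemma Dec.sub_Sc {n : ℕ} {φ : Sw n} {k m : ℕ} {c : ℝ} (h : Dec k (m+1) φ c) (χ : Sw n)
    (hχ : ∫ y, χ y = 1) {δ : ℝ} (hδ1 : δ ≤ 1) (hs : ∀ y, δ ≤ ‖y‖ → χ y = 0) :
    Dec k m (φ - Sc χ φ) (2 ^ k * δ * (∫ y, ‖χ y‖) * c) := fun z => by
  have hδ0 : 0 ≤ δ := by
    by_contra hneg
    push Not at hneg
    have : ∫ y, χ y = 0 := by
      rw [integral_eq_zero_of_ae]
      exact Eventually.of_forall fun y => hs y (hneg.le.trans (norm_nonneg y))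
    rw [this] at hχ; norm_num at hχ
  have e1 : iteratedFDeriv ℝ m (φ - Sc χ φ : Sw n) z =
      ∫ y, χ y • (iteratedFDeriv ℝ m φ z - iteratedFDeriv ℝ m φ (z - y)) := by
    have e2 : iteratedFDeriv ℝ m (φ - Sc χ φ : Sw n) z =
        iteratedFDeriv ℝ m φ z - iteratedFDeriv ℝ m (Sc χ φ) z := by
      rw [← iteratedFDeriv_sub_apply]
      · rfl
      · exact (φ.smooth m).contDiffAt
      · exact ((Sc χ φ).smooth m).contDiffAt
    have h1 := (φ.smooth ⊤).continuous_iteratedFDeriv (m := m) (by exact_mod_cast le_top)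
    have i1 : Integrable (fun y => χ y • iteratedFDeriv ℝ m φ z) := χ.integrable.smul_const _
    have i2 : Integrable (fun y => χ y • iteratedFDeriv ℝ m φ (z - y)) := by
      refine (χ.integrable.norm.mul_const (SchwartzMap.seminorm ℝ 0 m φ)).mono' ?_ ?_
      · exact (Continuous.smul χ.continuous (h1.comp (by fun_prop))).aestronglyMeasurable
      · refine Eventually.of_forall fun y => ?_
        rw [norm_smul]
        gcongr
        exact SchwartzMap.norm_iteratedFDeriv_le_seminorm ℝ φ m _
    simp only [smul_sub]
    rw [integral_sub i1 i2, integral_smul_const, hχ, one_smul, e2, Sc_iteratedFDeriv]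
  rw [e1]
  have h0 : ‖∫ y, χ y • (iteratedFDeriv ℝ m φ z - iteratedFDeriv ℝ m φ (z - y))‖ ≤
      ∫ y, ‖χ y‖ * (2 ^ k * c * δ / (1 + ‖z‖) ^ k) := by
    refine norm_integral_le_of_norm_le (χ.integrable.norm.mul_const _)
      (Eventually.of_forall fun y => ?_)
    rw [norm_smul]
    by_cases hy : δ ≤ ‖y‖
    · simp [hs y hy]
    · push Not at hy
      gcongr
      rw [le_div_iff₀ (by positivity), mul_comm]
      have := h.mvt z (z - y) (by simpa using hy.le.trans hδ1)
      refine this.trans ?_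
      have e3 : z - (z - y) = y := by abel
      rw [e3]
      have := h.nonneg
      gcongr
  rw [integral_mul_const, ← mul_div_assoc, le_div_iff₀ (by positivity)] at h0
  linarith

lemma g_Sc {n : ℕ} (g : Sw n →L[ℝ] ℝ) (χ φ : Sw n) (x : Eu n) :
    g (Tr x (Sc χ φ)) = ∫ y, χ y * g (Tr (x - y) φ) := by
  have hc : Continuous fun y : Eu n => Tr (x - y) φ := (continuous_Tr φ).comp (by fun_prop)
  refine interchange volume g (fun y => Tr (x - y) φ) hc χ χ.continuous.measurable _ ?_ ?_
  · intro z
    rw [Tr_apply, Sc_apply]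
    congr 1; ext y
    rw [Tr_apply, sub_right_comm]
  · intro k m
    obtain ⟨c, hd⟩ := exists_Dec k m φ
    have hc0 := hd.nonneg
    refine ((integrable_weight k χ).mul_const ((1 + ‖x‖) ^ k * c)).mono' ?_ ?_
    · have h1 := ((schwartz_withSeminorms ℝ (Eu n) ℝ).continuous_seminorm (k, m)).comp hc
      exact (χ.continuous.norm.mul h1).aestronglyMeasurable
    · refine Eventually.of_forall fun y => ?_
      rw [Real.norm_of_nonneg (mul_nonneg (norm_nonneg _) (apply_nonneg _ _))]
      have h2 := hd.seminorm_Tr_le (x - y)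
      have h3 := weight_sub k (x - y) x
      have h4 : ‖x - y - x‖ = ‖y‖ := by
        have : x - y - x = -y := by abel
        rw [this, norm_neg]
      rw [h4] at h3
      calc ‖χ y‖ * SchwartzMap.seminorm ℝ k m (Tr (x - y) φ)
          ≤ ‖χ y‖ * (((1 + ‖x‖) ^ k * (1 + ‖y‖) ^ k) * c) := by
            gcongr; exact h2.trans (by gcongr)
        _ = _ := by ring

lemma f_Sc {n : ℕ} (g : Sw n →L[ℝ] ℝ) (w θ : Sw n) :
    g (Sc w (Tr 0 θ)) = ∫ x, w x * g (Tr x θ) := by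
  have hc : Continuous fun y : Eu n => Tr y θ := continuous_Tr θ
  refine interchange volume g (fun y => Tr y θ) hc w w.continuous.measurable _ ?_ ?_
  · intro z
    rw [Sc_apply]
    congr 1; ext y
    rw [Tr_apply, Tr_apply, zero_sub, neg_sub]
  · intro k m
    obtain ⟨c, hd⟩ := exists_Dec k m θ
    have hc0 := hd.nonneg
    refine ((integrable_weight k w).mul_const c).mono' ?_ ?_
    · have h1 := ((schwartz_withSeminorms ℝ (Eu n) ℝ).continuous_seminorm (k, m)).comp hc
      exact (w.continuous.norm.mul h1).aestronglyMeasurable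
    · refine Eventually.of_forall fun y => ?_
      rw [Real.norm_of_nonneg (mul_nonneg (norm_nonneg _) (apply_nonneg _ _))]
      have h2 := hd.seminorm_Tr_le y
      calc ‖w y‖ * SchwartzMap.seminorm ℝ k m (Tr y θ)
          ≤ ‖w y‖ * ((1 + ‖y‖) ^ k * c) := by gcongr
        _ = _ := by ring

lemma order_bound {n : ℕ} (g : Sw n →L[ℝ] ℝ) :
    ∃ C, 0 ≤ C ∧ ∃ N : ℕ, (∀ φ c, (∀ k m, k ≤ N → m ≤ N → SchwartzMap.seminorm ℝ k m φ ≤ c) →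
      |g φ| ≤ C * c) ∧ ∀ φ c, (∀ k m, k ≤ N → m ≤ N → Dec k m φ c) → ∀ x,
      |g (Tr x φ)| ≤ C * ((1 + ‖x‖) ^ N * c) := by
  obtain ⟨s₀, C, -, hC⟩ := Seminorm.bound_of_continuous (schwartz_withSeminorms ℝ (Eu n) ℝ)
    ((normSeminorm ℝ ℝ).comp g.toLinearMap) (by
      exact continuous_norm.comp g.continuous)
  obtain ⟨N, hN⟩ : ∃ N : ℕ, ∀ i ∈ s₀, i.1 ≤ N ∧ i.2 ≤ N := by
    refine ⟨s₀.sup fun i => max i.1 i.2, fun i hi => ?_⟩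
    have := Finset.le_sup (f := fun i : ℕ × ℕ => max i.1 i.2) hi
    have h2 : max i.1 i.2 ≤ s₀.sup fun i => max i.1 i.2 := this
    exact ⟨(le_max_left _ _).trans h2, (le_max_right _ _).trans h2⟩
  have h1 : ∀ φ c, (∀ k m, k ≤ N → m ≤ N → SchwartzMap.seminorm ℝ k m φ ≤ c) →
      |g φ| ≤ C * c := by
    intro φ c h
    have h0 : 0 ≤ c := (apply_nonneg _ _).trans (h 0 0 (by omega) (by omega))
    have h2 := hC φ
    have h3 : (s₀.sup (schwartzSeminormFamily ℝ (Eu n) ℝ)) φ ≤ c :=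
      Seminorm.finset_sup_apply_le h0 fun i hi => h i.1 i.2 (hN i hi).1 (hN i hi).2
    have h4 : |g φ| ≤ C * (s₀.sup (schwartzSeminormFamily ℝ (Eu n) ℝ)) φ := h2
    exact h4.trans (by gcongr)
  refine ⟨C, C.2, N, h1, fun φ c h x => h1 _ _ fun k m hk hm => ?_⟩
  refine ((h k m hk hm).seminorm_Tr_le x).trans ?_
  have := (h k m hk hm).nonneg
  gcongr
  · linarith [norm_nonneg x]

/-- Directional derivative of a Schwartz function. -/
def Pd {n : ℕ} (v : Eu n) (φ : Sw n) : Sw n := LineDeriv.lineDerivOpCLM ℝ (Sw n) v φ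

lemma Pd_apply {n : ℕ} (v : Eu n) (φ : Sw n) (z : Eu n) : Pd v φ z = fderiv ℝ φ z v := by
  unfold Pd
  exact SchwartzMap.lineDerivOp_apply_eq_fderiv v φ z

lemma Pd_sum {n : ℕ} (v : Eu n) (φ : Sw n) :
    Pd v φ = ∑ i, v i • Pd (EuclideanSpace.single i 1) φ := by
  ext z
  rw [sum_apply, Pd_apply]
  simp only [smul_apply, Pd_apply]
  have : v = ∑ i, v i • EuclideanSpace.single i (1:ℝ) := by
    ext j
    simp [Finset.sum_apply, Pi.single_apply]
  conv_lhs => rw [this]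
  rw [map_sum]
  simp

lemma Pd_add {n : ℕ} (v : Eu n) (φ η : Sw n) : Pd v (φ + η) = Pd v φ + Pd v η := by
  unfold Pd; rw [map_add]

lemma diff_formula {n : ℕ} (f : Sw n →L[ℝ] ℝ) (φ : Sw n) (x y : Eu n) :
    f (Tr x φ) - f (Tr (x - y) φ) =
      ∫ s in Icc (0:ℝ) 1, 1 * f (Tr (x - s • y) (Pd y φ)) := by
  rw [← map_sub]
  have hc : Continuous fun s : ℝ => Tr (x - s • y) (Pd y φ) := (continuous_Tr _).comp (by fun_prop)
  refine interchange _ f _ hc (fun _ => 1) measurable_const _ ?_ ?_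
  · intro z
    simp only [Tr_apply, Pd_apply, one_mul, sub_apply]
    rw [integral_Icc_eq_integral_Ioc, ← intervalIntegral.integral_of_le zero_le_one]
    have hd : ∀ s : ℝ, HasDerivAt (fun s : ℝ => - φ (x - s • y - z))
        (fderiv ℝ φ (x - s • y - z) y) s := by
      intro s
      have h1 : HasFDerivAt φ (fderiv ℝ φ (x - s • y - z)) (x - s • y - z) :=
        (φ.differentiableAt).hasFDerivAt
      have h2 : HasDerivAt (fun s : ℝ => x - s • y - z) (-y) s := by
        have := (((hasDerivAt_id s).smul_const y).const_sub x).sub_const z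
        simpa using this
      have := (h1.comp_hasDerivAt s h2).neg
      rw [map_neg, neg_neg] at this
      exact this
    rw [intervalIntegral.integral_eq_sub_of_hasDerivAt (fun s _ => hd s)]
    · simp; ring_nf; try rw [sub_right_comm]
    · have : Continuous fun s : ℝ => Pd y φ (x - s • y - z) :=
        (Pd y φ).continuous.comp (by fun_prop)
      simp only [Pd_apply] at this
      exact this.intervalIntegrable _ _
  · intro k m
    have h1 := ((schwartz_withSeminorms ℝ (Eu n) ℝ).continuous_seminorm (k, m)).comp hc
    have h2 := (continuous_const (y := ‖(1:ℝ)‖)).mul h1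
    exact h2.continuousOn.integrableOn_compact isCompact_Icc

lemma diff_bound {n : ℕ} (f : Sw n →L[ℝ] ℝ) (φ : Sw n) (x y : Eu n) (K : ℝ)
    (hK : ∀ s ∈ Icc (0:ℝ) 1, ∀ i, |f (Tr (x - s • y) (Pd (EuclideanSpace.single i 1) φ))| ≤ K) :
    |f (Tr (x - y) φ) - f (Tr x φ)| ≤ n * (‖y‖ * K) := by
  rw [abs_sub_comm, diff_formula]
  have := norm_setIntegral_le_of_norm_le_const (μ := (volume : Measure ℝ)) (s := Icc (0:ℝ) 1)
    (f := fun s => 1 * f (Tr (x - s • y) (Pd y φ))) (C := n * (‖y‖ * K)) (by simp) ?_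
  · simpa using this
  · intro s hs
    rw [one_mul, Pd_sum, Tr_sum, map_sum]
    refine (norm_sum_le _ _).trans ?_
    have : ∀ i ∈ Finset.univ, ‖f (Tr (x - s • y) (y i • Pd (EuclideanSpace.single i 1) φ))‖ ≤ ‖y‖ * K := by
      intro i _
      rw [Tr_smul, map_smul, norm_smul]
      gcongr
      · exact PiLp.norm_apply_le y i
      · exact hK s hs i
    refine (Finset.sum_le_sum this).trans ?_
    simp

/-- A dyadic mollifier sequence. -/
structure Moll {n : ℕ} (Ψ : ℕ → Sw n) (B : ℝ) : Prop where
  int : ∀ k, ∫ y, Ψ k y = 1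
  supp : ∀ k z, ((2:ℝ) ^ k)⁻¹ ≤ ‖z‖ → Ψ k z = 0
  norm : ∀ k, ∫ y, ‖Ψ k y‖ ≤ B
  dec : ∀ k' i, ∃ C, ∀ k, Dec k' i (Ψ k) (C * 2 ^ (k * (n + i)))

lemma Moll.B_nonneg {n : ℕ} {Ψ : ℕ → Sw n} {B : ℝ} (h : Moll Ψ B) : 0 ≤ B :=
  le_trans (integral_nonneg fun _ => norm_nonneg _) (h.norm 0)

/-- Remainders. -/
def Zr {n : ℕ} (Ψ : ℕ → Sw n) (k : ℕ) : ℕ → Sw n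
  | 0 => Ψ k
  | m + 1 => Zr Ψ k m - Sc (Ψ (k + m)) (Zr Ψ k m)

lemma Dec.sub {n k m : ℕ} {φ η : Sw n} {c d : ℝ} (h : Dec k m φ c) (h' : Dec k m η d) :
    Dec k m (φ - η) (c + d) := fun z => by
  have e2 : iteratedFDeriv ℝ m (φ - η : Sw n) z =
      iteratedFDeriv ℝ m φ z - iteratedFDeriv ℝ m η z := by
    rw [← iteratedFDeriv_sub_apply]
    · rfl
    · exact (φ.smooth m).contDiffAt
    · exact (η.smooth m).contDiffAt
  rw [e2]
  calc _ ≤ (1 + ‖z‖) ^ k * (‖iteratedFDeriv ℝ m φ z‖ + ‖iteratedFDeriv ℝ m η z‖) := by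
        gcongr; exact norm_sub_le _ _
    _ = (1 + ‖z‖) ^ k * ‖iteratedFDeriv ℝ m φ z‖ + (1 + ‖z‖) ^ k * ‖iteratedFDeriv ℝ m η z‖ := by ring
    _ ≤ _ := add_le_add (h z) (h' z)

lemma Moll.weight {n : ℕ} {Ψ : ℕ → Sw n} {B : ℝ} (h : Moll Ψ B) (k j : ℕ) :
    ∫ y, (1 + ‖y‖) ^ k * ‖Ψ j y‖ ≤ 2 ^ k * B := by
  calc ∫ y, (1 + ‖y‖) ^ k * ‖Ψ j y‖ ≤ ∫ y, 2 ^ k * ‖Ψ j y‖ := by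
        refine integral_mono (integrable_weight k _) ((Ψ j).integrable.norm.const_mul _) fun y => ?_
        dsimp only
        by_cases hy : ((2:ℝ) ^ j)⁻¹ ≤ ‖y‖
        · simp [h.supp j y hy]
        · push Not at hy
          have : ((2:ℝ) ^ j)⁻¹ ≤ 1 := inv_le_one_of_one_le₀ (one_le_pow₀ (by norm_num))
          gcongr
          linarith
    _ = 2 ^ k * ∫ y, ‖Ψ j y‖ := integral_const_mul _ _
    _ ≤ _ := by gcongr; exact h.norm j

lemma Moll.Zr_dec_aux {n : ℕ} {Ψ : ℕ → Sw n} {B : ℝ} (h : Moll Ψ B) (L : ℕ) : ∀ k' i : ℕ,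
    ∃ C, 0 ≤ C ∧ ∀ k m, Dec k' i (Zr Ψ k m)
      (C * 2 ^ (k * (n + i)) * (1 + 2 ^ k' * B) ^ m * ((2:ℝ) ^ (L * m))⁻¹) := by
  have hB := h.B_nonneg
  induction L with
  | zero =>
    intro k' i
    obtain ⟨C, hC⟩ := h.dec k' i
    have hC0 : 0 ≤ C := by simpa using (hC 0).nonneg
    refine ⟨C, hC0, fun k m => ?_⟩
    induction m with
    | zero => refine (hC k).mono ?_; simp
    | succ m ih =>
      refine (ih.sub (ih.conv (Ψ (k + m)))).mono ?_
      have h1 := h.weight k' (k + m)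
      simp only [zero_mul, pow_zero, inv_one, mul_one] at ih ⊢
      have h0 := ih.nonneg
      calc _ ≤ C * 2 ^ (k * (n + i)) * (1 + 2 ^ k' * B) ^ m +
            (2 ^ k' * B) * (C * 2 ^ (k * (n + i)) * (1 + 2 ^ k' * B) ^ m) := by gcongr
        _ = _ := by ring
  | succ L ih =>
    intro k' i
    obtain ⟨C, hC0, hC⟩ := ih k' (i+1)
    obtain ⟨C', hC'⟩ := h.dec k' i
    have hC0' : 0 ≤ C' := by simpa using (hC' 0).nonneg
    refine ⟨C' + C * 2 ^ (L + 1), by positivity, fun k m => ?_⟩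
    cases m with
    | zero =>
      refine (hC' k).mono ?_
      simp only [pow_zero, mul_one, mul_zero, inv_one]
      gcongr
      linarith [show 0 ≤ C * 2 ^ (L + 1) by positivity]
    | succ m =>
      have h1 := (hC k m).sub_Sc (Ψ (k + m)) (h.int _) (δ := ((2:ℝ) ^ (k + m))⁻¹)
        (inv_le_one_of_one_le₀ (one_le_pow₀ (by norm_num))) (h.supp _)
      refine Dec.mono h1 ?_
      have h2 := h.norm (k + m)
      calc _ ≤ 2 ^ k' * ((2:ℝ) ^ (k + m))⁻¹ * B * (C * 2 ^ (k * (n + (i + 1))) *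
            (1 + 2 ^ k' * B) ^ m * (2 ^ (L * m))⁻¹) := by gcongr
        _ = (2 ^ k' * B) * (C * 2 ^ (L + 1) * 2 ^ (k * (n + i)) * (1 + 2 ^ k' * B) ^ m *
            (2 ^ ((L + 1) * (m + 1)))⁻¹) := by
          have e1 : (2:ℝ) ^ (k * (n + (i + 1))) = 2 ^ (k * (n + i)) * 2 ^ k := by ring
          have e2 : (2:ℝ) ^ ((L + 1) * (m + 1)) = 2 ^ (L * m) * 2 ^ m * 2 ^ (L + 1) := by ring
          have e3 : (2:ℝ) ^ (k + m) = 2 ^ k * 2 ^ m := by ring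
          rw [e1, e2, e3]
          field_simp
        _ ≤ (1 + 2 ^ k' * B) * ((C' + C * 2 ^ (L + 1)) * 2 ^ (k * (n + i)) * (1 + 2 ^ k' * B) ^ m *
            (2 ^ ((L + 1) * (m + 1)))⁻¹) := by
          gcongr
          · linarith
          · linarith
        _ = _ := by ring

lemma Moll.Zr_dec {n : ℕ} {Ψ : ℕ → Sw n} {B : ℝ} (h : Moll Ψ B) (L k' i : ℕ) :
    ∃ C, 0 ≤ C ∧ ∀ k m, Dec k' i (Zr Ψ k m)
      (C * 2 ^ (k * (n + i)) * ((2:ℝ) ^ (L * m))⁻¹) := by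
  obtain ⟨K, hK⟩ := pow_unbounded_of_one_lt (1 + 2 ^ k' * B) (by norm_num : (1:ℝ) < 2)
  have hB := h.B_nonneg
  obtain ⟨C, hC0, hC⟩ := h.Zr_dec_aux (L + K) k' i
  refine ⟨C, hC0, fun k m => (hC k m).mono ?_⟩
  calc _ ≤ C * 2 ^ (k * (n + i)) * ((2:ℝ) ^ K) ^ m * ((2:ℝ) ^ ((L + K) * m))⁻¹ := by gcongr
    _ = _ := by
      have e2 : (2:ℝ) ^ ((L + K) * m) = 2 ^ (L * m) * (2 ^ K) ^ m := by ring
      rw [e2]; field_simp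

lemma Moll.Zr_supp {n : ℕ} {Ψ : ℕ → Sw n} {B : ℝ} (h : Moll Ψ B) (k m : ℕ) (z : Eu n)
    (hz : (3 - 2 / 2 ^ m) / (2:ℝ) ^ k ≤ ‖z‖) : Zr Ψ k m z = 0 := by
  induction m generalizing z with
  | zero =>
    apply h.supp
    rw [← one_div]
    norm_num at hz ⊢
    exact hz
  | succ m ih =>
    have hp : (0:ℝ) < 2 ^ m := by positivity
    have hpk : (0:ℝ) < 2 ^ k := by positivity
    have e : (3 - 2 / 2 ^ (m + 1)) / (2:ℝ) ^ k =
        (3 - 2 / 2 ^ m) / (2:ℝ) ^ k + ((2:ℝ) ^ (k + m))⁻¹ := by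
      rw [pow_succ, pow_add]; field_simp; ring
    rw [e] at hz
    have h1 : Zr Ψ k m z = 0 := ih z (le_trans (by linarith [show 0 ≤ ((2:ℝ) ^ (k + m))⁻¹ by positivity]) hz)
    have h2 : Sc (Ψ (k + m)) (Zr Ψ k m) z = 0 := by
      rw [Sc_apply]
      apply integral_eq_zero_of_ae
      refine Eventually.of_forall fun y => ?_
      dsimp only
      by_cases hy : ((2:ℝ) ^ (k + m))⁻¹ ≤ ‖y‖
      · simp [h.supp _ y hy]
      · push Not at hy
        rw [ih (z - y), mul_zero]
        · rfl
        have := norm_sub_norm_le z y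
        linarith
    change Zr Ψ k m z - Sc (Ψ (k + m)) (Zr Ψ k m) z = 0
    rw [h1, h2, sub_zero]

lemma Zr_telescope {n : ℕ} (Ψ : ℕ → Sw n) (k M : ℕ) :
    Ψ k = ∑ m ∈ Finset.range M, Sc (Ψ (k + m)) (Zr Ψ k m) + Zr Ψ k M := by
  induction M with
  | zero => simp [Zr]
  | succ M ih =>
    rw [Finset.sum_range_succ]
    change _ = _ + _ + (Zr Ψ k M - Sc (Ψ (k + M)) (Zr Ψ k M))
    rw [add_assoc, add_sub_cancel]
    exact ih

lemma Moll.Zr_tendsto {n : ℕ} {Ψ : ℕ → Sw n} {B : ℝ} (h : Moll Ψ B) (g : Sw n →L[ℝ] ℝ)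
    (k : ℕ) (y : Eu n) : Tendsto (fun M => g (Tr y (Zr Ψ k M))) atTop (𝓝 0) := by
  obtain ⟨C, hC0, N, -, hN⟩ := order_bound g
  choose D hD0 hD using h.Zr_dec 1
  set D' := ∑ a ∈ Finset.range (N + 1), ∑ b ∈ Finset.range (N + 1), D a b * 2 ^ (k * (n + b)) with hD'
  have hDa' : ∀ a b, a ≤ N → b ≤ N → D a b * 2 ^ (k * (n + b)) ≤ D' := by
    intro a b ha hb
    have p : ∀ a b, 0 ≤ D a b * 2 ^ (k * (n + b)) := fun a b => mul_nonneg (hD0 a b) (by positivity)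
    refine le_trans ?_ (Finset.single_le_sum (f := fun a => ∑ b ∈ Finset.range (N + 1), D a b * 2 ^ (k * (n + b)))
      (fun a _ => Finset.sum_nonneg fun b _ => p a b) (Finset.mem_range.2 (Nat.lt_succ_of_le ha)))
    exact Finset.single_le_sum (f := fun b => D a b * 2 ^ (k * (n + b)))
      (fun b _ => p a b) (Finset.mem_range.2 (Nat.lt_succ_of_le hb))
  have hb : ∀ M, |g (Tr y (Zr Ψ k M))| ≤ C * ((1 + ‖y‖) ^ N * D') * ((2:ℝ)⁻¹) ^ M := by
    intro M
    refine (hN (Zr Ψ k M) (D' * ((2:ℝ)⁻¹) ^ M) (fun a b ha hb => ?_) y).trans (le_of_eq (by ring))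
    refine (hD a b k M).mono ?_
    rw [one_mul, inv_pow]
    gcongr
    exact hDa' a b ha hb
  refine squeeze_zero_norm hb ?_
  have := (tendsto_pow_atTop_nhds_zero_of_lt_one (by norm_num : (0:ℝ) ≤ 2⁻¹) (by norm_num)).const_mul
    (C * ((1 + ‖y‖) ^ N * D'))
  simpa using this

lemma continuous_gTr {n : ℕ} (g : Sw n →L[ℝ] ℝ) (φ : Sw n) : Continuous fun y => g (Tr y φ) :=
  g.continuous.comp (continuous_Tr φ)

lemma Moll.key {n : ℕ} {Ψ : ℕ → Sw n} {B : ℝ} (h : Moll Ψ B) (L : ℕ) :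
    ∃ C : ℝ, 0 ≤ C ∧ ∀ (g : Sw n →L[ℝ] ℝ) (k : ℕ) (y : Eu n), ‖g (Tr y (Ψ k))‖ₑ ≤
      ∑' m : ℕ, ENNReal.ofReal (C * 2 ^ (k * n) * ((2:ℝ) ^ (L * m))⁻¹) *
        ∫⁻ z in ball y (3 / 2 ^ k), ‖g (Tr z (Ψ (k + m)))‖ₑ := by
  obtain ⟨C, hC0, hC⟩ := h.Zr_dec L 0 0
  refine ⟨C, hC0, fun g k y => ?_⟩
  have hterm : ∀ m, ‖g (Tr y (Sc (Ψ (k + m)) (Zr Ψ k m)))‖ₑ ≤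
      ENNReal.ofReal (C * 2 ^ (k * n) * ((2:ℝ) ^ (L * m))⁻¹) *
        ∫⁻ z in ball y (3 / 2 ^ k), ‖g (Tr z (Ψ (k + m)))‖ₑ := by
    intro m
    rw [Sc_comm, g_Sc]
    refine (enorm_integral_le_lintegral_enorm _).trans ?_
    rw [← lintegral_const_mul' _ _ ENNReal.ofReal_ne_top, ← lintegral_indicator measurableSet_ball]
    conv_rhs => rw [← lintegral_sub_left_eq_self _ y]
    refine lintegral_mono fun z => ?_
    by_cases hz : z ∈ ball (0 : Eu n) (3 / 2 ^ k)
    · have : y - z ∈ ball y (3 / 2 ^ k) := by simpa using hz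
      rw [indicator_of_mem this, enorm_mul]
      gcongr
      have := hC k m z
      simp only [pow_zero, one_mul, norm_iteratedFDeriv_zero, add_zero] at this
      rw [← ofReal_norm]
      exact ENNReal.ofReal_le_ofReal this
    · rw [h.Zr_supp k m z]
      · simp
      · have h2 : 3 / 2 ^ k ≤ ‖z‖ := by simpa using hz
        refine le_trans ?_ h2
        gcongr
        have : (0:ℝ) ≤ 2 / 2 ^ m := by positivity
        linarith
  have hM : ∀ M, ‖g (Tr y (Ψ k))‖ₑ ≤ (∑' m : ℕ, ENNReal.ofReal (C * 2 ^ (k * n) * ((2:ℝ) ^ (L * m))⁻¹) *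
        ∫⁻ z in ball y (3 / 2 ^ k), ‖g (Tr z (Ψ (k + m)))‖ₑ) + ‖g (Tr y (Zr Ψ k M))‖ₑ := by
    intro M
    conv_lhs => rw [Zr_telescope Ψ k M, Tr_add, map_add, Tr_sum, map_sum]
    refine (enorm_add_le _ _).trans ?_
    gcongr
    refine (enorm_sum_le _ _).trans ((Finset.sum_le_sum fun m _ => hterm m).trans ?_)
    exact ENNReal.sum_le_tsum _
  have ht : Tendsto (fun M => (∑' m : ℕ, ENNReal.ofReal (C * 2 ^ (k * n) * ((2:ℝ) ^ (L * m))⁻¹) *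
        ∫⁻ z in ball y (3 / 2 ^ k), ‖g (Tr z (Ψ (k + m)))‖ₑ) + ‖g (Tr y (Zr Ψ k M))‖ₑ) atTop
        (𝓝 ((∑' m : ℕ, ENNReal.ofReal (C * 2 ^ (k * n) * ((2:ℝ) ^ (L * m))⁻¹) *
        ∫⁻ z in ball y (3 / 2 ^ k), ‖g (Tr z (Ψ (k + m)))‖ₑ) + 0)) := by
    refine Tendsto.const_add _ ?_
    have := (continuous_enorm.tendsto (0:ℝ)).comp (h.Zr_tendsto g k y)
    rw [enorm_zero] at this
    exact this
  rw [add_zero] at ht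
  exact ge_of_tendsto' ht hM

lemma Moll.apriori {n : ℕ} {Ψ : ℕ → Sw n} {B : ℝ} (h : Moll Ψ B) (g : Sw n →L[ℝ] ℝ) :
    ∃ C N, 0 ≤ C ∧ ∀ (k : ℕ) (y : Eu n), |g (Tr y (Ψ k))| ≤ C * (1 + ‖y‖) ^ N * 2 ^ (k * (n + N)) := by
  obtain ⟨C, hC0, N, -, hN⟩ := order_bound g
  choose D hD using h.dec
  have hD0 : ∀ a b, 0 ≤ D a b := fun a b => by simpa using (hD a b 0).nonneg
  set D' := ∑ a ∈ Finset.range (N + 1), ∑ b ∈ Finset.range (N + 1), D a b with hD'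
  have hDa' : ∀ a b, a ≤ N → b ≤ N → D a b ≤ D' := by
    intro a b ha hb
    refine le_trans ?_ (Finset.single_le_sum (f := fun a => ∑ b ∈ Finset.range (N + 1), D a b)
      (fun a _ => Finset.sum_nonneg fun b _ => hD0 a b) (Finset.mem_range.2 (Nat.lt_succ_of_le ha)))
    exact Finset.single_le_sum (f := fun b => D a b)
      (fun b _ => hD0 a b) (Finset.mem_range.2 (Nat.lt_succ_of_le hb))
  have hD'0 : 0 ≤ D' := (hD0 0 0).trans (hDa' 0 0 (by omega) (by omega))
  refine ⟨C * D', N, by positivity, fun k y => ?_⟩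
  refine (hN (Ψ k) (D' * 2 ^ (k * (n + N))) (fun a b ha hb => ?_) y).trans (le_of_eq (by ring))
  refine (hD a b k).mono ?_
  gcongr
  · exact hDa' a b ha hb
  · norm_num

lemma ennreal_self_improve {P X : ℝ≥0∞} {r : ℝ} (hr0 : 0 < r) (hr1 : r ≤ 1) (hP : P ≠ ⊤)
    (h : P ≤ X * P ^ (1 - r)) : P ^ r ≤ X := by
  by_cases hP0 : P = 0
  · rw [hP0, ENNReal.zero_rpow_of_pos hr0]; exact zero_le
  · have e : P ^ r * P ^ (1 - r) = P := by
      rw [← ENNReal.rpow_add _ _ hP0 hP]; simp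
    have h1 : P ^ r * P ^ (1 - r) ≤ X * P ^ (1 - r) := by rw [e]; exact h
    have hne : P ^ (1 - r) ≠ 0 := by
      simp [ENNReal.rpow_eq_zero_iff, hP0, hP]
    have hne' : P ^ (1 - r) ≠ ⊤ := ENNReal.rpow_ne_top_of_nonneg (by linarith) hP
    exact (ENNReal.mul_le_mul_iff_left hne hne').1 h1

lemma Moll.peetre {n : ℕ} {Ψ : ℕ → Sw n} {B : ℝ} (h : Moll Ψ B) (g : Sw n →L[ℝ] ℝ)
    (M : Eu n → ℝ≥0∞) (hM : ∀ k y, ‖g (Tr y (Ψ k))‖ₑ ≤ M y) (r : ℝ) (hr0 : 0 < r) (hr1 : r ≤ 1) :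
    ∃ K : ℝ≥0∞, K ≠ ⊤ ∧ ∀ (j : ℕ) (x : Eu n) (Q : ℝ≥0∞),
      (∀ ρ : ℝ, ((2:ℝ) ^ j)⁻¹ ≤ ρ → ∫⁻ z in ball x (3 * ρ), M z ^ r ≤ Q * ENNReal.ofReal (ρ ^ n)) →
      ∀ l y, l ≤ 1 → ‖x - y‖ ≤ 2 / 2 ^ j → ‖g (Tr y (Ψ (j + l)))‖ₑ ^ r ≤ K * Q := by
  obtain ⟨C₀, N, hC₀, hap⟩ := h.apriori g
  obtain ⟨A, hA⟩ := exists_nat_ge (max ((n:ℝ) + N) (n / r))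
  have hA1 : n + N ≤ A := by exact_mod_cast (le_max_left _ _).trans hA
  have hA2 : (n:ℝ) ≤ A * r := by
    have := (le_max_right _ _).trans hA
    rwa [div_le_iff₀ hr0] at this
  obtain ⟨C, hC0, hkey⟩ := h.key (A + 1)
  set K1 : ℝ≥0∞ := ENNReal.ofReal (C * 4 ^ A) * 2 with hK1
  have hK1t : K1 ≠ ⊤ := ENNReal.mul_ne_top ENNReal.ofReal_ne_top (by norm_num)
  refine ⟨K1 * (ENNReal.ofReal 6 ^ A) ^ r, ENNReal.mul_ne_top hK1t
    (ENNReal.rpow_ne_top_of_nonneg hr0.le (ENNReal.pow_ne_top ENNReal.ofReal_ne_top)), ?_⟩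
  intro j x Q hQ
  set w : ℕ → Eu n → ℝ := fun l y => 2 ^ l * (1 + 2 ^ j * ‖x - y‖) with hw
  have hw1 : ∀ l y, 1 ≤ w l y := fun l y => by
    have h1 : (1:ℝ) ≤ 2 ^ l := one_le_pow₀ (by norm_num)
    have h2 : 0 ≤ 2 ^ j * ‖x - y‖ := by positivity
    exact one_le_mul_of_one_le_of_one_le h1 (by linarith)
  set W : ℕ → Eu n → ℝ≥0∞ := fun l y => ENNReal.ofReal (w l y) with hW
  have hW1 : ∀ l y, 1 ≤ W l y := fun l y => by
    rw [hW, ← ENNReal.ofReal_one]; exact ENNReal.ofReal_le_ofReal (hw1 l y)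
  have hWt : ∀ l y, W l y ≠ ⊤ := fun l y => ENNReal.ofReal_ne_top
  have hW0 : ∀ l y, W l y ≠ 0 := fun l y => (lt_of_lt_of_le zero_lt_one (hW1 l y)).ne'
  have hWA0 : ∀ l y, W l y ^ A ≠ 0 := fun l y => pow_ne_zero _ (hW0 l y)
  have hWAt : ∀ l y, W l y ^ A ≠ ⊤ := fun l y => ENNReal.pow_ne_top (hWt l y)
  set P : ℝ≥0∞ := ⨆ l : ℕ, ⨆ y : Eu n, ‖g (Tr y (Ψ (j + l)))‖ₑ / (W l y) ^ A with hP
  have hPle : ∀ l y, ‖g (Tr y (Ψ (j + l)))‖ₑ ≤ P * (W l y) ^ A := by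
    intro l y
    rw [← ENNReal.div_le_iff (hWA0 l y) (hWAt l y)]
    exact le_iSup₂ (f := fun (l : ℕ) (y : Eu n) => ‖g (Tr y (Ψ (j + l)))‖ₑ / (W l y) ^ A) l y
  have hPt : P ≠ ⊤ := by
    refine ne_top_of_le_ne_top (b := ENNReal.ofReal (C₀ * 2 ^ (j * (n + N)) * (1 + ‖x‖) ^ N))
      ENNReal.ofReal_ne_top (iSup₂_le fun l y => ?_)
    rw [ENNReal.div_le_iff (hWA0 l y) (hWAt l y), hW, ← ENNReal.ofReal_pow (by linarith [hw1 l y]),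
      ← ENNReal.ofReal_mul (by positivity), ← ofReal_norm]
    refine ENNReal.ofReal_le_ofReal ?_
    have h1 := hap (j + l) y
    have h2 := weight_sub N y x
    rw [Real.norm_eq_abs]
    refine h1.trans ?_
    have h3 : (1 + ‖y - x‖) ≤ 1 + 2 ^ j * ‖x - y‖ := by
      rw [norm_sub_rev]
      have : (1:ℝ) ≤ 2 ^ j := one_le_pow₀ (by norm_num)
      nlinarith [norm_nonneg (x - y)]
    have h4 : (1 + ‖y - x‖) ^ N * (2:ℝ) ^ (l * (n + N)) ≤ w l y ^ A := by
      have h5 : (1:ℝ) ≤ 1 + 2 ^ j * ‖x - y‖ := by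
        have h2 : 0 ≤ 2 ^ j * ‖x - y‖ := by positivity
        linarith
      calc (1 + ‖y - x‖) ^ N * (2:ℝ) ^ (l * (n + N))
          ≤ (1 + 2 ^ j * ‖x - y‖) ^ A * (2:ℝ) ^ (l * A) := by
            gcongr
            · exact (pow_le_pow_left₀ (by positivity) h3 N).trans (pow_le_pow_right₀ h5 (by omega))
            · norm_num
        _ = w l y ^ A := by simp only [hw]; rw [mul_pow, ← pow_mul, mul_comm]
    calc C₀ * (1 + ‖y‖) ^ N * 2 ^ ((j + l) * (n + N))
        ≤ C₀ * ((1 + ‖x‖) ^ N * (1 + ‖y - x‖) ^ N) * 2 ^ ((j + l) * (n + N)) := by gcongr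
      _ = C₀ * 2 ^ (j * (n + N)) * (1 + ‖x‖) ^ N * ((1 + ‖y - x‖) ^ N * 2 ^ (l * (n + N))) := by ring
      _ ≤ _ := by gcongr
  have hr1' : 0 ≤ 1 - r := by linarith
  have main : P ≤ (K1 * Q) * P ^ (1 - r) := by
    refine iSup₂_le fun l y => ?_
    rw [ENNReal.div_le_iff (hWA0 l y) (hWAt l y)]
    set I := ∫⁻ z in ball y (3 / 2 ^ (j + l)), M z ^ r with hI
    have hintg : ∀ m : ℕ, ∫⁻ z in ball y (3 / 2 ^ (j + l)), ‖g (Tr z (Ψ (j + l + m)))‖ₑ ≤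
        (ENNReal.ofReal (4 * 2 ^ m) ^ A * (W l y ^ A) ^ (1 - r) * P ^ (1 - r)) * I := by
      intro m
      rw [hI, ← lintegral_const_mul' _ _ (ENNReal.mul_ne_top (ENNReal.mul_ne_top
        (ENNReal.pow_ne_top ENNReal.ofReal_ne_top) (ENNReal.rpow_ne_top_of_nonneg hr1' (hWAt l y)))
        (ENNReal.rpow_ne_top_of_nonneg hr1' hPt))]
      refine setLIntegral_mono' measurableSet_ball fun z hz => ?_
      rw [mem_ball, dist_eq_norm] at hz
      have hwz : w (l + m) z ≤ 4 * 2 ^ m * w l y := by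
        have t1 : ‖x - z‖ ≤ ‖x - y‖ + 3 / 2 ^ (j + l) := by
          have := norm_sub_le_norm_sub_add_norm_sub x y z
          rw [norm_sub_rev y z] at this
          linarith
        have t2 : (2:ℝ) ^ j * (3 / 2 ^ (j + l)) ≤ 3 := by
          rw [pow_add]
          have : (1:ℝ) ≤ 2 ^ l := one_le_pow₀ (by norm_num)
          have e : (2:ℝ) ^ j * (3 / (2 ^ j * 2 ^ l)) = 3 / 2 ^ l := by field_simp
          rw [e]
          exact div_le_self (by norm_num) this
        have t3 : 1 + 2 ^ j * ‖x - z‖ ≤ 4 * (1 + 2 ^ j * ‖x - y‖) := by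
          have t4 : (2:ℝ) ^ j * ‖x - z‖ ≤ 2 ^ j * (‖x - y‖ + 3 / 2 ^ (j + l)) := by gcongr
          have t5 : 0 ≤ 2 ^ j * ‖x - y‖ := by positivity
          linarith
        calc w (l + m) z = 2 ^ (l + m) * (1 + 2 ^ j * ‖x - z‖) := rfl
          _ ≤ 2 ^ (l + m) * (4 * (1 + 2 ^ j * ‖x - y‖)) := by gcongr
          _ = _ := by rw [hw]; ring
      have hWz : W (l + m) z ≤ ENNReal.ofReal (4 * 2 ^ m) * W l y := by
        rw [hW, ← ENNReal.ofReal_mul (by positivity)]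
        exact ENNReal.ofReal_le_ofReal hwz
      have h41 : 1 ≤ ENNReal.ofReal (4 * 2 ^ m) ^ A := by
        refine one_le_pow₀ ?_
        rw [← ENNReal.ofReal_one]
        refine ENNReal.ofReal_le_ofReal ?_
        have : (1:ℝ) ≤ 2 ^ m := one_le_pow₀ (by norm_num)
        linarith
      have b1 := hPle (l + m) z
      rw [← add_assoc] at b1
      set a := ‖g (Tr z (Ψ (j + l + m)))‖ₑ with ha
      have b2 : a ≤ P * (ENNReal.ofReal (4 * 2 ^ m) ^ A * W l y ^ A) := by
        refine b1.trans ?_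
        rw [← mul_pow]
        gcongr
      calc a = a ^ (1 - r) * a ^ r := by
            rw [← ENNReal.rpow_add_of_nonneg _ _ hr1' hr0.le]; simp
        _ ≤ (P * (ENNReal.ofReal (4 * 2 ^ m) ^ A * W l y ^ A)) ^ (1 - r) * M z ^ r := by
            gcongr
            exact hM _ _
        _ = (ENNReal.ofReal (4 * 2 ^ m) ^ A) ^ (1 - r) * (W l y ^ A) ^ (1 - r) * P ^ (1 - r) * M z ^ r := by
            rw [ENNReal.mul_rpow_of_nonneg _ _ hr1', ENNReal.mul_rpow_of_nonneg _ _ hr1']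
            ring
        _ ≤ _ := by
            gcongr
            calc _ ≤ (ENNReal.ofReal (4 * 2 ^ m) ^ A) ^ (1:ℝ) :=
                  ENNReal.rpow_le_rpow_of_exponent_le h41 (by linarith)
              _ = _ := ENNReal.rpow_one _
    set ρ : ℝ := ((2:ℝ) ^ j)⁻¹ + ‖x - y‖ with hρ
    have hIQ : I ≤ Q * ENNReal.ofReal (ρ ^ n) := by
      refine le_trans (lintegral_mono_set ?_) (hQ ρ (by rw [hρ]; linarith [norm_nonneg (x - y)]))
      intro z hz
      rw [mem_ball] at hz ⊢
      have t1 := dist_triangle z y x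
      rw [dist_comm y x, dist_eq_norm x y] at t1
      have t2 : 3 / (2:ℝ) ^ (j + l) ≤ 3 * ((2:ℝ) ^ j)⁻¹ := by
        rw [div_eq_mul_inv]
        gcongr
        · norm_num
        · omega
      rw [hρ]
      linarith [norm_nonneg (x - y)]
    have hWn : ENNReal.ofReal (2 ^ ((j + l) * n)) * ENNReal.ofReal (ρ ^ n) ≤ (W l y ^ A) ^ r := by
      have e : (2:ℝ) ^ ((j + l) * n) * ρ ^ n = w l y ^ n := by
        rw [pow_mul, ← mul_pow, hρ, hw]
        congr 1
        rw [pow_add]; field_simp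
      rw [← ENNReal.ofReal_mul (by positivity), e, ENNReal.ofReal_pow (by linarith [hw1 l y]),
        ← ENNReal.rpow_natCast, ← ENNReal.rpow_natCast, ← ENNReal.rpow_mul]
      exact ENNReal.rpow_le_rpow_of_exponent_le (hW1 l y) hA2
    have e2 : (W l y ^ A) ^ (1 - r) * (W l y ^ A) ^ r = W l y ^ A := by
      rw [← ENNReal.rpow_add_of_nonneg _ _ hr1' hr0.le]; simp
    have ecoef : ∀ m : ℕ, ENNReal.ofReal (C * 2 ^ ((j + l) * n) * ((2:ℝ) ^ ((A + 1) * m))⁻¹) *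
        ENNReal.ofReal (4 * 2 ^ m) ^ A = ENNReal.ofReal (C * 4 ^ A) *
          ENNReal.ofReal (2 ^ ((j + l) * n)) * (2⁻¹ : ℝ≥0∞) ^ m := by
      intro m
      have e3 : (2⁻¹ : ℝ≥0∞) = ENNReal.ofReal 2⁻¹ := by
        rw [ENNReal.ofReal_inv_of_pos (by norm_num)]; norm_num
      rw [e3, ← ENNReal.ofReal_pow (by positivity), ← ENNReal.ofReal_pow (by norm_num),
        ← ENNReal.ofReal_mul (by positivity), ← ENNReal.ofReal_mul (by positivity),
        ← ENNReal.ofReal_mul (by positivity)]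
      congr 1
      have e4 : (2:ℝ) ^ ((A + 1) * m) = (2 ^ m) ^ A * 2 ^ m := by ring
      rw [e4, mul_pow, inv_pow]
      field_simp
    calc ‖g (Tr y (Ψ (j + l)))‖ₑ ≤ _ := hkey g (j + l) y
      _ ≤ ∑' m : ℕ, ENNReal.ofReal (C * 2 ^ ((j + l) * n) * ((2:ℝ) ^ ((A + 1) * m))⁻¹) *
          ((ENNReal.ofReal (4 * 2 ^ m) ^ A * (W l y ^ A) ^ (1 - r) * P ^ (1 - r)) * I) := by
          refine ENNReal.tsum_le_tsum fun m => ?_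
          gcongr
          exact hintg m
      _ = ∑' m : ℕ, (ENNReal.ofReal (C * 4 ^ A) * ENNReal.ofReal (2 ^ ((j + l) * n)) *
          ((W l y ^ A) ^ (1 - r) * P ^ (1 - r) * I)) * (2⁻¹ : ℝ≥0∞) ^ m := by
          refine tsum_congr fun m => ?_
          calc _ = (ENNReal.ofReal (C * 2 ^ ((j + l) * n) * ((2:ℝ) ^ ((A + 1) * m))⁻¹) *
              ENNReal.ofReal (4 * 2 ^ m) ^ A) * ((W l y ^ A) ^ (1 - r) * P ^ (1 - r) * I) := by ring
            _ = _ := by rw [ecoef]; ring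
      _ = (ENNReal.ofReal (C * 4 ^ A) * ENNReal.ofReal (2 ^ ((j + l) * n)) *
          ((W l y ^ A) ^ (1 - r) * P ^ (1 - r) * I)) * 2 := by
          rw [ENNReal.tsum_mul_left, ENNReal.tsum_geometric, ENNReal.one_sub_inv_two, inv_inv]
      _ ≤ (ENNReal.ofReal (C * 4 ^ A) * ENNReal.ofReal (2 ^ ((j + l) * n)) *
          ((W l y ^ A) ^ (1 - r) * P ^ (1 - r) * (Q * ENNReal.ofReal (ρ ^ n)))) * 2 := by gcongr
      _ = K1 * Q * P ^ (1 - r) * ((W l y ^ A) ^ (1 - r) *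
          (ENNReal.ofReal (2 ^ ((j + l) * n)) * ENNReal.ofReal (ρ ^ n))) := by rw [hK1]; ring
      _ ≤ K1 * Q * P ^ (1 - r) * ((W l y ^ A) ^ (1 - r) * (W l y ^ A) ^ r) := by gcongr
      _ = _ := by rw [e2]
  have hfin := ennreal_self_improve hr0 hr1 hPt main
  intro l y hl hy
  have hw6 : W l y ≤ ENNReal.ofReal 6 := by
    refine ENNReal.ofReal_le_ofReal ?_
    have t1 : (2:ℝ) ^ j * ‖x - y‖ ≤ 2 := by
      calc (2:ℝ) ^ j * ‖x - y‖ ≤ 2 ^ j * (2 / 2 ^ j) := by gcongr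
        _ = 2 := by field_simp
    have t2 : (2:ℝ) ^ l ≤ 2 := by
      calc (2:ℝ) ^ l ≤ 2 ^ 1 := by gcongr; norm_num
        _ = 2 := by norm_num
    calc w l y = 2 ^ l * (1 + 2 ^ j * ‖x - y‖) := rfl
      _ ≤ 2 * (1 + 2) := by gcongr
      _ = 6 := by norm_num
  calc ‖g (Tr y (Ψ (j + l)))‖ₑ ^ r ≤ (P * (ENNReal.ofReal 6) ^ A) ^ r := by
        gcongr
        exact (hPle l y).trans (by gcongr)
    _ = P ^ r * (ENNReal.ofReal 6 ^ A) ^ r := ENNReal.mul_rpow_of_nonneg _ _ hr0.le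
    _ ≤ K1 * Q * (ENNReal.ofReal 6 ^ A) ^ r := by gcongr
    _ = _ := by ring

/-- Uncentered maximal function over a countable family of balls. -/
def HLM {n : ℕ} (G : Eu n → ℝ≥0∞) (x : Eu n) : ℝ≥0∞ :=
  ⨆ a : ℕ × ℚ, (closedBall (TopologicalSpace.denseSeq (Eu n) a.1) (a.2:ℝ)).indicator
    (fun _ => (∫⁻ z in closedBall (TopologicalSpace.denseSeq (Eu n) a.1) (a.2:ℝ), G z) /
      ENNReal.ofReal ((a.2:ℝ) ^ n)) x

lemma measurable_HLM {n : ℕ} (G : Eu n → ℝ≥0∞) : Measurable (HLM G) := by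
  refine Measurable.iSup fun a => ?_
  exact measurable_const.indicator measurableSet_closedBall

lemma HLM_ball {n : ℕ} (G : Eu n → ℝ≥0∞) (x : Eu n) (ρ : ℝ) (hρ : 0 < ρ) :
    ∫⁻ z in ball x (3 * ρ), G z ≤ (ENNReal.ofReal (5 ^ n) * HLM G x) * ENNReal.ofReal (ρ ^ n) := by
  obtain ⟨q, hq1, hq2⟩ := exists_rat_btwn (show 4 * ρ < 5 * ρ by linarith)
  obtain ⟨i, hi⟩ : ∃ i, dist x (TopologicalSpace.denseSeq (Eu n) i) < ρ := by
    exact (TopologicalSpace.denseRange_denseSeq (Eu n)).exists_dist_lt x hρ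
  set c := TopologicalSpace.denseSeq (Eu n) i with hc
  have hq0 : (0:ℝ) < q := by linarith
  have hx : x ∈ closedBall c (q:ℝ) := by rw [mem_closedBall]; linarith
  have h1 : (∫⁻ z in closedBall c (q:ℝ), G z) / ENNReal.ofReal ((q:ℝ) ^ n) ≤ HLM G x := by
    refine le_trans ?_ (le_iSup _ ((i, q) : ℕ × ℚ))
    rw [indicator_of_mem hx]
  rw [ENNReal.div_le_iff (by simp; positivity) ENNReal.ofReal_ne_top] at h1
  calc ∫⁻ z in ball x (3 * ρ), G z ≤ ∫⁻ z in closedBall c (q:ℝ), G z := by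
        refine lintegral_mono_set fun z hz => ?_
        rw [mem_ball] at hz
        rw [mem_closedBall]
        linarith [dist_triangle z x c]
    _ ≤ HLM G x * ENNReal.ofReal ((q:ℝ) ^ n) := h1
    _ ≤ HLM G x * ENNReal.ofReal ((5 * ρ) ^ n) := by gcongr
    _ = _ := by rw [mul_pow, ENNReal.ofReal_mul (by positivity)]; ring

lemma lintegral_trunc_le {n : ℕ} (G : Eu n → ℝ≥0∞) (s : ℝ) (hs : 0 < s) :
    ∫⁻ z, {z | ENNReal.ofReal s < G z}.indicator G z ≤ (ENNReal.ofReal s)⁻¹ * ∫⁻ z, G z ^ 2 := by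
  rw [← lintegral_const_mul' _ _ (by simpa using hs)]
  refine lintegral_mono fun z => ?_
  by_cases hz : ENNReal.ofReal s < G z
  · rw [indicator_of_mem (by exact hz)]
    have h0 : ENNReal.ofReal s ≠ 0 := by simpa using hs
    calc G z = (ENNReal.ofReal s)⁻¹ * (ENNReal.ofReal s * G z) := by
          rw [← mul_assoc, ENNReal.inv_mul_cancel h0 ENNReal.ofReal_ne_top, one_mul]
      _ ≤ (ENNReal.ofReal s)⁻¹ * (G z * G z) := by gcongr
      _ = _ := by rw [sq]
  · rw [indicator_of_notMem (by exact hz)]; exact zero_le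

lemma HLM_weak {n : ℕ} (hn : 1 ≤ n) : ∃ (c : ℝ) (K : ℝ≥0∞), 0 < c ∧ K ≠ ⊤ ∧
    ∀ G : Eu n → ℝ≥0∞, Measurable G → ∫⁻ z, G z ^ 2 ≠ ⊤ → ∀ t : ℝ, 0 < t →
      volume {x | ENNReal.ofReal t < HLM G x} ≤
        K * (ENNReal.ofReal t)⁻¹ * ∫⁻ z, {z | ENNReal.ofReal (c * t) < G z}.indicator G z := by
  set v : ℝ≥0∞ := volume (ball (0 : Eu n) 1) with hv
  have hvt : v ≠ ⊤ := measure_ball_lt_top.ne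
  have hv0 : v ≠ 0 := (measure_ball_pos _ _ zero_lt_one).ne'
  have hvr : 0 < v.toReal := ENNReal.toReal_pos hv0 hvt
  have hvol : ∀ (x : Eu n) (r : ℝ), 0 ≤ r → volume (closedBall x r) = ENNReal.ofReal (r ^ n) * v := by
    intro x r hr
    rw [Measure.addHaar_closedBall _ _ hr, finrank_euclideanSpace_fin]
  set c : ℝ := 1 / (2 * v.toReal) with hc
  have hc0 : 0 < c := by positivity
  have hcv : ENNReal.ofReal c * v = 2⁻¹ := by
    rw [← ENNReal.ofReal_toReal hvt, ← ENNReal.ofReal_mul hc0.le, hc]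
    have : 1 / (2 * v.toReal) * v.toReal = 2⁻¹ := by field_simp
    rw [this, ENNReal.ofReal_inv_of_pos (by norm_num)]; norm_num
  refine ⟨c, 2 * ENNReal.ofReal (5 ^ n) * v, hc0,
    ENNReal.mul_ne_top (ENNReal.mul_ne_top (by norm_num) ENNReal.ofReal_ne_top) hvt, ?_⟩
  intro G hG hG2 t ht
  set Gt := {z | ENNReal.ofReal (c * t) < G z}.indicator G with hGt
  have hGtm : Measurable Gt := hG.indicator (measurableSet_lt measurable_const hG)
  have hfin : ∫⁻ z, Gt z ≠ ⊤ := by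
    refine ne_top_of_le_ne_top ?_ (lintegral_trunc_le G (c * t) (by positivity))
    refine ENNReal.mul_ne_top ?_ hG2
    simp; positivity
  set ctr : ℕ × ℚ → Eu n := fun a => TopologicalSpace.denseSeq (Eu n) a.1
  set rad : ℕ × ℚ → ℝ := fun a => (a.2 : ℝ)
  set S : Set (ℕ × ℚ) := {a | 0 ≤ rad a ∧
    ENNReal.ofReal t * ENNReal.ofReal (rad a ^ n) < ∫⁻ z in closedBall (ctr a) (rad a), G z} with hS
  have hcov : {x | ENNReal.ofReal t < HLM G x} ⊆ ⋃ a ∈ S, closedBall (ctr a) (rad a) := by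
    intro x hx
    obtain ⟨a, ha⟩ := lt_iSup_iff.1 (show ENNReal.ofReal t < HLM G x from hx)
    by_cases hxa : x ∈ closedBall (ctr a) (rad a)
    · rw [indicator_of_mem (by exact hxa)] at ha
      refine mem_iUnion₂.2 ⟨a, ⟨?_, ?_⟩, hxa⟩
      · exact nonempty_closedBall.1 ⟨x, hxa⟩
      · have := ENNReal.mul_lt_of_lt_div ha
        exact this
    · rw [indicator_of_notMem (by exact hxa)] at ha
      exact absurd ha (by simp)
  have hS2 : ∀ a ∈ S, ENNReal.ofReal t * ENNReal.ofReal (rad a ^ n) ≤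
      2 * ∫⁻ z in closedBall (ctr a) (rad a), Gt z := by
    intro a ha
    set X := ENNReal.ofReal t * ENNReal.ofReal (rad a ^ n) with hX
    have hXt : X ≠ ⊤ := ENNReal.mul_ne_top ENNReal.ofReal_ne_top ENNReal.ofReal_ne_top
    set Y := ∫⁻ z in closedBall (ctr a) (rad a), Gt z with hY
    have h1 : ∫⁻ z in closedBall (ctr a) (rad a), G z ≤ Y + X / 2 := by
      calc ∫⁻ z in closedBall (ctr a) (rad a), G z
          ≤ ∫⁻ z in closedBall (ctr a) (rad a), (Gt z + ENNReal.ofReal (c * t)) := by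
            refine lintegral_mono fun z => ?_
            by_cases hz : ENNReal.ofReal (c * t) < G z
            · rw [hGt, indicator_of_mem (by exact hz)]; exact le_self_add
            · exact (not_lt.1 hz).trans le_add_self
        _ = Y + ENNReal.ofReal (c * t) * (ENNReal.ofReal (rad a ^ n) * v) := by
            rw [lintegral_add_left hGtm, lintegral_const, Measure.restrict_apply_univ, hvol _ _ ha.1]
        _ = Y + X / 2 := by
            rw [ENNReal.ofReal_mul hc0.le, ENNReal.div_eq_inv_mul, ← hcv, hX]; ring
    have h2 : X / 2 + X / 2 < Y + X / 2 := by
      rw [ENNReal.add_halves]; exact ha.2.trans_le h1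
    have h3 : X / 2 < Y := lt_of_add_lt_add_right h2
    calc X = 2 * (X / 2) := by rw [ENNReal.mul_div_cancel (by norm_num) (by norm_num)]
      _ ≤ 2 * Y := by gcongr
  obtain ⟨R, hR⟩ : ∃ R : ℝ, ∀ a ∈ S, rad a ≤ R := by
    refine ⟨max 1 ((2 * ∫⁻ z, Gt z).toReal / t), fun a ha => ?_⟩
    by_cases h1 : rad a ≤ 1
    · exact h1.trans (le_max_left _ _)
    · push Not at h1
      refine le_trans ?_ (le_max_right _ _)
      rw [le_div_iff₀ ht]
      have h2 : rad a ≤ rad a ^ n := le_self_pow₀ h1.le (by omega)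
      have h3 := (hS2 a ha).trans (mul_le_mul_right (setLIntegral_le_lintegral _ _) _)
      rw [← ENNReal.ofReal_mul ht.le] at h3
      have h4 := (ENNReal.ofReal_le_iff_le_toReal (ENNReal.mul_ne_top (by norm_num) hfin)).1 h3
      nlinarith
  obtain ⟨u, huS, hdisj, hu⟩ := Vitali.exists_disjoint_subfamily_covering_enlargement_closedBall
    S ctr rad R hR 5 (by norm_num)
  have hcov2 : {x | ENNReal.ofReal t < HLM G x} ⊆ ⋃ a ∈ u, closedBall (ctr a) (5 * rad a) := by
    refine hcov.trans (iUnion₂_subset fun a ha => ?_)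
    obtain ⟨b, hb, hab⟩ := hu a ha
    exact hab.trans (subset_iUnion₂_of_subset b hb Subset.rfl)
  have ht0 : ENNReal.ofReal t ≠ 0 := by simpa using ht
  calc volume {x | ENNReal.ofReal t < HLM G x}
      ≤ volume (⋃ a ∈ u, closedBall (ctr a) (5 * rad a)) := measure_mono hcov2
    _ ≤ ∑' a : u, volume (closedBall (ctr a) (5 * rad a)) := measure_biUnion_le _ (to_countable u) _
    _ ≤ ∑' a : u, (2 * ENNReal.ofReal (5 ^ n) * v * (ENNReal.ofReal t)⁻¹) *
        ∫⁻ z in closedBall (ctr a) (rad a), Gt z := by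
        refine ENNReal.tsum_le_tsum fun a => ?_
        have ha := huS a.2
        rw [hvol _ _ (by linarith [ha.1]), mul_pow, ENNReal.ofReal_mul (by positivity)]
        have h2 := hS2 a ha
        calc ENNReal.ofReal (5 ^ n) * ENNReal.ofReal (rad a ^ n) * v
            = ENNReal.ofReal (5 ^ n) * v * (ENNReal.ofReal t)⁻¹ *
              (ENNReal.ofReal t * ENNReal.ofReal (rad a ^ n)) := by
              calc _ = ENNReal.ofReal (5 ^ n) * v * ENNReal.ofReal (rad a ^ n) *
                ((ENNReal.ofReal t)⁻¹ * ENNReal.ofReal t) := by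
                    rw [ENNReal.inv_mul_cancel ht0 ENNReal.ofReal_ne_top]; ring
                _ = _ := by ring
          _ ≤ ENNReal.ofReal (5 ^ n) * v * (ENNReal.ofReal t)⁻¹ *
              (2 * ∫⁻ z in closedBall (ctr a) (rad a), Gt z) := by gcongr
          _ = _ := by ring
    _ = (2 * ENNReal.ofReal (5 ^ n) * v * (ENNReal.ofReal t)⁻¹) *
        ∑' a : u, ∫⁻ z in closedBall (ctr a) (rad a), Gt z := ENNReal.tsum_mul_left
    _ ≤ _ := by
        gcongr
        rw [← lintegral_biUnion (to_countable u) (fun a _ => measurableSet_closedBall) hdisj]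
        exact setLIntegral_le_lintegral _ _

lemma sq_le_layer (a : ℝ≥0∞) : a ^ 2 ≤
    ∫⁻ t in Ioi (0:ℝ), ENNReal.ofReal (2 * t) * {t : ℝ | ENNReal.ofReal t < a}.indicator 1 t := by
  induction a with
  | top =>
    have h1 : ∫⁻ t in Ioi (1:ℝ), (1:ℝ≥0∞) = ⊤ := by simp
    have h2 : ∫⁻ t in Ioi (1:ℝ), (1:ℝ≥0∞) ≤ ∫⁻ t in Ioi (0:ℝ),
        ENNReal.ofReal (2 * t) * {t : ℝ | ENNReal.ofReal t < ⊤}.indicator 1 t := by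
      refine (setLIntegral_mono' measurableSet_Ioi fun t ht => ?_).trans
        (lintegral_mono_set (Ioi_subset_Ioi zero_le_one))
      have : t ∈ {t : ℝ | ENNReal.ofReal t < ⊤} := ENNReal.ofReal_lt_top
      rw [indicator_of_mem this, Pi.one_apply, mul_one, ← ENNReal.ofReal_one]
      refine ENNReal.ofReal_le_ofReal ?_
      have : 1 < t := ht
      linarith
    rw [h1, top_le_iff] at h2
    rw [h2]; exact le_top
  | coe b =>
    have h2 : ∫⁻ t in Ioo (0:ℝ) b, ENNReal.ofReal (2 * t) ≤ ∫⁻ t in Ioi (0:ℝ),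
        ENNReal.ofReal (2 * t) * {t : ℝ | ENNReal.ofReal t < b}.indicator 1 t := by
      refine (setLIntegral_mono' measurableSet_Ioo fun t ht => ?_).trans
        (lintegral_mono_set Ioo_subset_Ioi_self)
      have : t ∈ {t : ℝ | ENNReal.ofReal t < b} := by
        rw [mem_ofPred_eq, ← ENNReal.ofReal_coe_nnreal]
        exact (ENNReal.ofReal_lt_ofReal_iff_of_nonneg ht.1.le).2 ht.2
      rw [indicator_of_mem this, Pi.one_apply, mul_one]
    refine le_trans ?_ h2
    have hcont : Continuous fun t : ℝ => 2 * t := by fun_prop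
    rw [← ofReal_integral_eq_lintegral_ofReal, ← integral_Ioc_eq_integral_Ioo,
      ← intervalIntegral.integral_of_le b.coe_nonneg]
    · rw [intervalIntegral.integral_const_mul, integral_id]
      rw [← ENNReal.ofReal_coe_nnreal, ← ENNReal.ofReal_pow b.coe_nonneg]
      refine ENNReal.ofReal_le_ofReal (le_of_eq ?_)
      ring
    · exact (hcont.continuousOn.integrableOn_Icc (a := 0) (b := (b:ℝ))).mono_set Ioo_subset_Icc_self
    · refine (ae_restrict_iff' measurableSet_Ioo).2 (Eventually.of_forall fun t ht => ?_)
      have := ht.1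
      simp only [Pi.zero_apply]
      linarith

lemma layer_le (c : ℝ) (hc : 0 < c) (a : ℝ≥0∞) :
    ∫⁻ t in Ioi (0:ℝ), {t : ℝ | ENNReal.ofReal (c * t) < a}.indicator 1 t ≤ (ENNReal.ofReal c)⁻¹ * a := by
  induction a with
  | top =>
    rw [ENNReal.mul_top (by simp)]; exact le_top
  | coe b =>
    have hm : MeasurableSet {t : ℝ | ENNReal.ofReal (c * t) < (b : ℝ≥0∞)} :=
      measurableSet_lt (by fun_prop) measurable_const
    rw [lintegral_indicator_one hm, Measure.restrict_apply hm]
    have : {t : ℝ | ENNReal.ofReal (c * t) < (b : ℝ≥0∞)} ∩ Ioi 0 ⊆ Ioo 0 (c⁻¹ * b) := by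
      rintro t ⟨h1, h2⟩
      refine ⟨h2, ?_⟩
      rw [mem_ofPred_eq, ← ENNReal.ofReal_coe_nnreal,
        ENNReal.ofReal_lt_ofReal_iff_of_nonneg (mul_nonneg hc.le (le_of_lt h2))] at h1
      rw [← div_eq_inv_mul, lt_div_iff₀ hc]
      linarith
    refine (measure_mono this).trans ?_
    rw [Real.volume_Ioo, sub_zero, ENNReal.ofReal_mul (by positivity), ENNReal.ofReal_inv_of_pos hc,
      ENNReal.ofReal_coe_nnreal]

lemma HLM_L2 {n : ℕ} (hn : 1 ≤ n) (G : Eu n → ℝ≥0∞) (hG : Measurable G)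
    (hG2 : ∫⁻ z, G z ^ 2 ≠ ⊤) : ∫⁻ z, HLM G z ^ 2 ≠ ⊤ := by
  obtain ⟨c, K, hc, hK, hw⟩ := HLM_weak hn
  have hH := measurable_HLM G
  have m1 : Measurable fun q : Eu n × ℝ => ENNReal.ofReal (2 * q.2) *
      {t : ℝ | ENNReal.ofReal t < HLM G q.1}.indicator 1 q.2 := by
    refine Measurable.mul (by fun_prop) ?_
    have : MeasurableSet {q : Eu n × ℝ | ENNReal.ofReal q.2 < HLM G q.1} :=
      measurableSet_lt (by fun_prop) (by fun_prop)
    exact (measurable_const (a := (1:ℝ≥0∞))).indicator this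
  have m2 : Measurable fun q : ℝ × Eu n =>
      {z | ENNReal.ofReal (c * q.1) < G z}.indicator G q.2 := by
    have : MeasurableSet {q : ℝ × Eu n | ENNReal.ofReal (c * q.1) < G q.2} :=
      measurableSet_lt (by fun_prop) (by fun_prop)
    exact (hG.comp measurable_snd).indicator this
  have key : ∫⁻ z, HLM G z ^ 2 ≤ 2 * K * ((ENNReal.ofReal c)⁻¹ * ∫⁻ z, G z ^ 2) := by
    calc ∫⁻ z, HLM G z ^ 2
        ≤ ∫⁻ z, ∫⁻ t in Ioi (0:ℝ), ENNReal.ofReal (2 * t) *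
            {t : ℝ | ENNReal.ofReal t < HLM G z}.indicator 1 t := lintegral_mono fun z => sq_le_layer _
      _ = ∫⁻ t in Ioi (0:ℝ), ∫⁻ z, ENNReal.ofReal (2 * t) *
            {t : ℝ | ENNReal.ofReal t < HLM G z}.indicator 1 t :=
          lintegral_lintegral_swap m1.aemeasurable
      _ ≤ ∫⁻ t in Ioi (0:ℝ), 2 * K * ∫⁻ z, {z | ENNReal.ofReal (c * t) < G z}.indicator G z := by
          refine setLIntegral_mono' measurableSet_Ioi fun t ht => ?_
          have ht : 0 < t := ht
          have ht0 : ENNReal.ofReal t ≠ 0 := by simpa using ht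
          rw [lintegral_const_mul' _ _ ENNReal.ofReal_ne_top]
          have e : ∫⁻ z, {t : ℝ | ENNReal.ofReal t < HLM G z}.indicator (1 : ℝ → ℝ≥0∞) t =
              volume {x | ENNReal.ofReal t < HLM G x} := by
            rw [← lintegral_indicator_one (measurableSet_lt measurable_const hH)]
            rfl
          rw [e]
          calc _ ≤ ENNReal.ofReal (2 * t) * _ := mul_le_mul_right (hw G hG hG2 t ht) _
            _ = 2 * K * (∫⁻ z, {z | ENNReal.ofReal (c * t) < G z}.indicator G z) *
              ((ENNReal.ofReal t)⁻¹ * ENNReal.ofReal t) := by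
                rw [ENNReal.ofReal_mul (by norm_num), ENNReal.ofReal_ofNat]; ring
            _ = _ := by rw [ENNReal.inv_mul_cancel ht0 ENNReal.ofReal_ne_top, mul_one]
      _ = 2 * K * ∫⁻ t in Ioi (0:ℝ), ∫⁻ z, {z | ENNReal.ofReal (c * t) < G z}.indicator G z := by
          rw [lintegral_const_mul' _ _ (ENNReal.mul_ne_top (by norm_num) hK)]
      _ = 2 * K * ∫⁻ z, ∫⁻ t in Ioi (0:ℝ), {z | ENNReal.ofReal (c * t) < G z}.indicator G z := by
          rw [lintegral_lintegral_swap m2.aemeasurable]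
      _ ≤ 2 * K * ∫⁻ z, (ENNReal.ofReal c)⁻¹ * G z ^ 2 := by
          gcongr with z
          have e : ∀ t, {z | ENNReal.ofReal (c * t) < G z}.indicator G z =
              G z * {t : ℝ | ENNReal.ofReal (c * t) < G z}.indicator 1 t := by
            intro t
            by_cases h : ENNReal.ofReal (c * t) < G z
            · rw [indicator_of_mem (by exact h), indicator_of_mem (by exact h)]; simp
            · rw [indicator_of_notMem (by exact h), indicator_of_notMem (by exact h)]; simp
          simp_rw [e]
          rw [lintegral_const_mul]
          · calc _ ≤ G z * _ := mul_le_mul_right (layer_le c hc (G z)) _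
              _ = _ := by ring
          · exact measurable_one.indicator (measurableSet_lt (by fun_prop) measurable_const)
      _ = _ := by rw [lintegral_const_mul' _ _ (by simpa using hc)]
  refine ne_top_of_le_ne_top ?_ key
  refine ENNReal.mul_ne_top (ENNReal.mul_ne_top (by norm_num) hK) (ENNReal.mul_ne_top (by simpa using hc) hG2)

lemma Moll.grad_bound {n : ℕ} (hn : 1 ≤ n) {Ψ : ℕ → Sw n} {B : ℝ} (h : Moll Ψ B) (g : Sw n →L[ℝ] ℝ)
    (M : Eu n → ℝ≥0∞) (hMm : Measurable M) (hM : ∀ k y, ‖g (Tr y (Ψ k))‖ₑ ≤ M y)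
    (p : ℝ) (hp0 : 0 < p) (hp1 : p ≤ 1) (hMp : ∫⁻ x, M x ^ p ≠ ⊤) :
    ∃ (T : Eu n → ℝ≥0∞) (K : ℝ≥0∞), Measurable T ∧ K ≠ ⊤ ∧ ∫⁻ x, T x ^ p ≠ ⊤ ∧
      ∀ (j : ℕ) (x : Eu n) (l : ℕ) (y : Eu n), l ≤ 1 → ‖x - y‖ ≤ 2 / 2 ^ j →
        ‖g (Tr y (Ψ (j + l)))‖ₑ ≤ T x ∧
        ‖g (Tr y (Ψ (j + l)))‖ₑ ≤ K * ENNReal.ofReal (2 ^ j) ^ ((n:ℝ) / p) := by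
  set r := p / 2 with hr
  have hr0 : 0 < r := by positivity
  have hr1 : r ≤ 1 := by linarith
  obtain ⟨K, hK, hpe⟩ := h.peetre g M hM r hr0 hr1
  set G : Eu n → ℝ≥0∞ := fun z => M z ^ r with hG
  have hGm : Measurable G := hMm.pow_const _
  have hG2 : ∫⁻ z, G z ^ 2 = ∫⁻ z, M z ^ p := by
    congr 1; ext z
    rw [hG, ← ENNReal.rpow_natCast, ← ENNReal.rpow_mul]
    congr 1
    rw [hr]; push_cast; ring
  have hroot : ∀ a X : ℝ≥0∞, a ^ r ≤ X → a ≤ X ^ r⁻¹ := by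
    intro a X hX
    have := ENNReal.rpow_le_rpow hX (inv_nonneg.2 hr0.le)
    rwa [← ENNReal.rpow_mul, mul_inv_cancel₀ hr0.ne', ENNReal.rpow_one] at this
  set v : ℝ≥0∞ := volume (ball (0 : Eu n) 1) with hv
  have hvt : v ≠ ⊤ := measure_ball_lt_top.ne
  set S : ℝ≥0∞ := (∫⁻ z, M z ^ p) ^ (1 / 2 : ℝ) with hS
  have hSt : S ≠ ⊤ := ENNReal.rpow_ne_top_of_nonneg (by norm_num) hMp
  set D : ℝ≥0∞ := S * (ENNReal.ofReal (3 ^ n) * v) ^ (1 / 2 : ℝ) with hD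
  have hDt : D ≠ ⊤ := ENNReal.mul_ne_top hSt (ENNReal.rpow_ne_top_of_nonneg (by norm_num)
    (ENNReal.mul_ne_top ENNReal.ofReal_ne_top hvt))
  refine ⟨fun x => (K * (ENNReal.ofReal (5 ^ n) * HLM G x)) ^ r⁻¹, (K * D) ^ r⁻¹,
    (((measurable_HLM G).const_mul _).const_mul _).pow_const _,
    ENNReal.rpow_ne_top_of_nonneg (by positivity) (ENNReal.mul_ne_top hK hDt), ?_, ?_⟩
  · have e : ∀ x, ((K * (ENNReal.ofReal (5 ^ n) * HLM G x)) ^ r⁻¹) ^ p =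
        (K * ENNReal.ofReal (5 ^ n)) ^ 2 * HLM G x ^ 2 := by
      intro x
      rw [← ENNReal.rpow_mul]
      have : r⁻¹ * p = (2:ℕ) := by rw [hr]; push_cast; field_simp
      rw [this, ENNReal.rpow_natCast]; ring
    simp_rw [e]
    have ht : (K * ENNReal.ofReal (5 ^ n)) ^ 2 ≠ ⊤ :=
      ENNReal.pow_ne_top (ENNReal.mul_ne_top hK ENNReal.ofReal_ne_top)
    rw [lintegral_const_mul' _ _ ht]
    exact ENNReal.mul_ne_top ht (HLM_L2 hn G hGm (by rw [hG2]; exact hMp))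
  · intro j x l y hl hy
    constructor
    · refine hroot _ _ (hpe j x _ (fun ρ hρ => ?_) l y hl hy)
      exact HLM_ball G x ρ (lt_of_lt_of_le (by positivity) hρ)
    · have h1 := hroot _ _ (hpe j x (D * ENNReal.ofReal (2 ^ j) ^ ((n:ℝ) / 2)) (fun ρ hρ => ?_) l y hl hy)
      · refine h1.trans (le_of_eq ?_)
        rw [← mul_assoc, ENNReal.mul_rpow_of_nonneg _ _ (by positivity), ← ENNReal.rpow_mul]
        congr 2
        rw [hr]; field_simp
      · have hρ0 : 0 < ρ := lt_of_lt_of_le (by positivity) hρ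
        have cs := ENNReal.lintegral_mul_le_Lp_mul_Lq (volume.restrict (ball x (3 * ρ)))
          Real.HolderConjugate.two_two (f := G) (g := 1) hGm.aemeasurable aemeasurable_one
        have e1 : ∫⁻ z in ball x (3 * ρ), G z ^ (2:ℝ) ≤ ∫⁻ z, M z ^ p := by
          rw [← hG2]
          refine (setLIntegral_le_lintegral _ _).trans (le_of_eq ?_)
          congr 1; ext z
          exact ENNReal.rpow_natCast (G z) 2
        have e2 : ∫⁻ z in ball x (3 * ρ), (1 : Eu n → ℝ≥0∞) z ^ (2:ℝ) =
            ENNReal.ofReal (3 ^ n) * v * ENNReal.ofReal (ρ ^ n) := by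
          simp only [Pi.one_apply, ENNReal.one_rpow]
          rw [lintegral_const, Measure.restrict_apply_univ, one_mul,
            Measure.addHaar_ball_of_pos _ _ (by positivity : (0:ℝ) < 3 * ρ), finrank_euclideanSpace_fin, mul_pow,
            ENNReal.ofReal_mul (by positivity)]
          ring
        rw [e2] at cs
        have e3 : ENNReal.ofReal (ρ ^ n) ^ (1 / 2 : ℝ) ≤
            ENNReal.ofReal (2 ^ j) ^ ((n:ℝ) / 2) * ENNReal.ofReal (ρ ^ n) := by
          rw [ENNReal.ofReal_rpow_of_pos (by positivity), ENNReal.ofReal_rpow_of_pos (by positivity),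
            ← ENNReal.ofReal_mul (by positivity)]
          refine ENNReal.ofReal_le_ofReal ?_
          have e4 : ((2:ℝ) ^ j) ^ ((n:ℝ) / 2) = (((2:ℝ) ^ j) ^ n) ^ (1 / 2 : ℝ) := by
            rw [← Real.rpow_natCast ((2:ℝ) ^ j) n, ← Real.rpow_mul (by positivity)]
            congr 1; ring
          have e5 : ρ ^ n = (ρ ^ n) ^ (1 / 2 : ℝ) * (ρ ^ n) ^ (1 / 2 : ℝ) := by
            rw [← Real.rpow_add (by positivity)]; norm_num
          have e6 : 1 ≤ (((2:ℝ) ^ j) ^ n) ^ (1 / 2 : ℝ) * (ρ ^ n) ^ (1 / 2 : ℝ) := by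
            rw [← Real.mul_rpow (by positivity) (by positivity), ← mul_pow]
            refine Real.one_le_rpow (one_le_pow₀ ?_) (by norm_num)
            have : (0:ℝ) < 2 ^ j := by positivity
            rwa [inv_le_iff_one_le_mul₀' this] at hρ
          rw [e4]
          conv_rhs => rw [e5, ← mul_assoc]
          exact le_mul_of_one_le_left (by positivity) e6
        calc ∫⁻ z in ball x (3 * ρ), M z ^ r
            = ∫⁻ z in ball x (3 * ρ), (G * 1) z := by simp [hG]
          _ ≤ _ := cs
          _ ≤ S * (ENNReal.ofReal (3 ^ n) * v * ENNReal.ofReal (ρ ^ n)) ^ (1 / 2 : ℝ) := by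
              gcongr
              exact ENNReal.rpow_le_rpow e1 (by norm_num)
          _ = D * ENNReal.ofReal (ρ ^ n) ^ (1 / 2 : ℝ) := by
              rw [ENNReal.mul_rpow_of_nonneg _ _ (by norm_num), hD, mul_assoc]
          _ ≤ D * (ENNReal.ofReal (2 ^ j) ^ ((n:ℝ) / 2) * ENNReal.ofReal (ρ ^ n)) := by gcongr
          _ = _ := by ring

lemma integrable_mul_bdd {n : ℕ} (χ φ : Sw n) (z : Eu n) :
    Integrable fun y => χ y * φ (z - y) := by
  obtain ⟨C, hC⟩ := exists_Dec 0 0 φ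
  have hb : ∀ w, ‖φ w‖ ≤ C := fun w => by simpa using hC w
  refine Integrable.mono' (χ.integrable.norm.mul_const C) ?_ (Eventually.of_forall fun y => ?_)
  · exact (χ.continuous.mul (φ.continuous.comp (by fun_prop))).aestronglyMeasurable
  · rw [norm_mul]; gcongr; exact hb _

lemma Sc_add {n : ℕ} (χ φ η : Sw n) : Sc χ (φ + η) = Sc χ φ + Sc χ η := by
  ext z
  rw [add_apply, Sc_apply, Sc_apply, Sc_apply, ← integral_add (integrable_mul_bdd _ _ _)
    (integrable_mul_bdd _ _ _)]
  congr 1; ext y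
  rw [add_apply, mul_add]

lemma integrable_cpt {n : ℕ} (χ : Sw n) (δ : ℝ) (hs : ∀ y, δ ≤ ‖y‖ → χ y = 0) (F : Eu n → ℝ)
    (hF : Continuous F) : Integrable fun y => χ y * F y := by
  refine (χ.continuous.mul hF).integrable_of_hasCompactSupport ?_
  refine HasCompactSupport.mul_right ?_
  refine HasCompactSupport.intro (isCompact_closedBall (0:Eu n) δ) fun y hy => hs y ?_
  simp only [mem_closedBall, dist_zero_right, not_le] at hy
  exact hy.le

lemma conv_diff {n : ℕ} (f : Sw n →L[ℝ] ℝ) (χ φ : Sw n) (δ E : ℝ) (hχ : ∫ y, χ y = 1)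
    (hs : ∀ y, δ ≤ ‖y‖ → χ y = 0) (x : Eu n)
    (hE : ∀ y, ‖y‖ ≤ δ → |f (Tr (x - y) φ) - f (Tr x φ)| ≤ E) :
    |f (Tr x (Sc χ φ)) - f (Tr x φ)| ≤ (∫ y, ‖χ y‖) * E := by
  have h1 : f (Tr x (Sc χ φ)) - f (Tr x φ) =
      ∫ y, χ y * (f (Tr (x - y) φ) - f (Tr x φ)) := by
    simp only [mul_sub]
    rw [integral_sub, integral_mul_const, hχ, one_mul, g_Sc]
    · exact integrable_cpt χ δ hs _ ((continuous_gTr f φ).comp (by fun_prop))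
    · exact χ.integrable.mul_const _
  rw [h1, ← Real.norm_eq_abs, ← integral_mul_const]
  refine norm_integral_le_of_norm_le (χ.integrable.norm.mul_const _)
    (Eventually.of_forall fun y => ?_)
  by_cases hy : δ ≤ ‖y‖
  · simp [hs y hy]
  · rw [norm_mul]
    gcongr
    exact hE y (not_le.1 hy).le

lemma Moll.incr {n : ℕ} {Ψ : ℕ → Sw n} {B : ℝ} (h : Moll Ψ B) (f : Sw n →L[ℝ] ℝ) (j : ℕ) (x : Eu n)
    (A : ℝ) (hA : ∀ l ≤ 1, ∀ y, ‖x - y‖ ≤ 2 / 2 ^ j → ∀ i,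
      |f (Tr y (Pd (EuclideanSpace.single i 1) (Ψ (j + l))))| ≤ A) (hA0 : 0 ≤ A) :
    |f (Tr x (Sc (Ψ (j + 1)) (Ψ (j + 1)))) - f (Tr x (Sc (Ψ j) (Ψ j)))| ≤
      4 * n * B * (((2:ℝ) ^ j)⁻¹ * A) := by
  set V := Ψ (j + 1) + Ψ j with hV
  have e1 : f (Tr x (Sc (Ψ (j + 1)) (Ψ (j + 1)))) - f (Tr x (Sc (Ψ j) (Ψ j))) =
      (f (Tr x (Sc (Ψ (j + 1)) V)) - f (Tr x V)) - (f (Tr x (Sc (Ψ j) V)) - f (Tr x V)) := by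
    rw [hV, Sc_add, Sc_add, Sc_comm (Ψ (j + 1)) (Ψ j)]
    simp only [Tr_add, map_add]
    ring
  have hB := h.B_nonneg
  have hd : ∀ y : Eu n, ‖y‖ ≤ ((2:ℝ) ^ j)⁻¹ → |f (Tr (x - y) V) - f (Tr x V)| ≤
      n * (((2:ℝ) ^ j)⁻¹ * (2 * A)) := by
    intro y hy
    refine (diff_bound f V x y (2 * A) ?_).trans (by gcongr)
    intro s hs i
    rw [hV, Pd_add, Tr_add, map_add]
    have hxy : ‖x - (x - s • y)‖ ≤ 2 / 2 ^ j := by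
      have : x - (x - s • y) = s • y := by abel
      rw [this, norm_smul, Real.norm_eq_abs, abs_of_nonneg hs.1]
      calc s * ‖y‖ ≤ 1 * ((2:ℝ) ^ j)⁻¹ := by gcongr; exact hs.2
        _ ≤ 2 / 2 ^ j := by rw [div_eq_mul_inv]; gcongr; norm_num
    have a1 := hA 1 le_rfl _ hxy i
    have a2 := hA 0 (by norm_num) _ hxy i
    rw [add_zero] at a2
    refine (abs_add_le _ _).trans ?_
    linarith
  have hj : ((2:ℝ) ^ (j + 1))⁻¹ ≤ ((2:ℝ) ^ j)⁻¹ := by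
    gcongr
    · norm_num
    · omega
  have b1 := conv_diff f (Ψ (j + 1)) V _ _ (h.int _) (fun y hy => h.supp (j+1) y (hj.trans hy)) x hd
  have b2 := conv_diff f (Ψ j) V _ _ (h.int _) (h.supp j) x hd
  have c1 := mul_le_mul_of_nonneg_right (h.norm (j + 1))
    (show 0 ≤ n * (((2:ℝ) ^ j)⁻¹ * (2 * A)) by positivity)
  have c2 := mul_le_mul_of_nonneg_right (h.norm j)
    (show 0 ≤ n * (((2:ℝ) ^ j)⁻¹ * (2 * A)) by positivity)
  rw [e1]
  refine (abs_sub _ _).trans ?_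
  calc _ ≤ B * (n * (((2:ℝ) ^ j)⁻¹ * (2 * A))) + B * (n * (((2:ℝ) ^ j)⁻¹ * (2 * A))) := by linarith
    _ = _ := by ring

/-- Minus the derivative of a distribution composed suitably. -/
lemma exists_grad {n : ℕ} (f : Sw n →L[ℝ] ℝ) (v : Eu n) :
    ∃ g : Sw n →L[ℝ] ℝ, ∀ x φ, g (Tr x φ) = f (Tr x (Pd v φ)) := by
  refine ⟨-(f.comp (LineDeriv.lineDerivOpCLM ℝ (Sw n) v)), fun x φ => ?_⟩
  change -(f (Pd v (Tr x φ))) = _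
  rw [← map_neg]
  congr 1
  ext y
  rw [neg_apply, Pd_apply, Tr_apply, Pd_apply]
  have : (Tr x φ : Eu n → ℝ) = fun y => φ (x - y) := by ext y; exact Tr_apply x φ y
  rw [this]
  have hd : HasFDerivAt (fun y => φ (x - y)) ((fderiv ℝ φ (x - y)).comp (-(ContinuousLinearMap.id ℝ (Eu n)))) y := by
    refine HasFDerivAt.comp y (φ.differentiable _).hasFDerivAt ?_
    exact (hasFDerivAt_id y).const_sub x
  rw [hd.fderiv]
  simp

lemma Moll.grad_all {n : ℕ} (hn : 1 ≤ n) {Ψ : ℕ → Sw n} {B : ℝ} (h : Moll Ψ B) (f : Sw n →L[ℝ] ℝ)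
    (p : ℝ) (hp0 : 0 < p) (hp1 : p ≤ 1)
    (hM : ∀ i, ∫⁻ x, (⨆ k, ‖f (Tr x (Pd (EuclideanSpace.single i 1) (Ψ k)))‖ₑ) ^ p ≠ ⊤) :
    ∃ (N : Eu n → ℝ≥0∞) (K : ℝ≥0∞), Measurable N ∧ K ≠ ⊤ ∧ ∫⁻ x, N x ^ p ≠ ⊤ ∧
      ∀ (j : ℕ) (x : Eu n) (l : ℕ) (y : Eu n), l ≤ 1 → ‖x - y‖ ≤ 2 / 2 ^ j → ∀ i,
        ‖f (Tr y (Pd (EuclideanSpace.single i 1) (Ψ (j + l))))‖ₑ ≤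
          min (N x) (K * ENNReal.ofReal (2 ^ j) ^ ((n:ℝ) / p)) := by
  have hex : ∀ i : Fin n, ∃ (T : Eu n → ℝ≥0∞) (K : ℝ≥0∞), Measurable T ∧ K ≠ ⊤ ∧ ∫⁻ x, T x ^ p ≠ ⊤ ∧
      ∀ (j : ℕ) (x : Eu n) (l : ℕ) (y : Eu n), l ≤ 1 → ‖x - y‖ ≤ 2 / 2 ^ j →
        ‖f (Tr y (Pd (EuclideanSpace.single i 1) (Ψ (j + l))))‖ₑ ≤ T x ∧
        ‖f (Tr y (Pd (EuclideanSpace.single i 1) (Ψ (j + l))))‖ₑ ≤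
          K * ENNReal.ofReal (2 ^ j) ^ ((n:ℝ) / p) := by
    intro i
    obtain ⟨g, hg⟩ := exists_grad f (EuclideanSpace.single i 1)
    have := h.grad_bound hn g (fun x => ⨆ k, ‖g (Tr x (Ψ k))‖ₑ)
      (Measurable.iSup fun k => (continuous_gTr g (Ψ k)).enorm.measurable)
      (fun k y => le_iSup (fun k => ‖g (Tr y (Ψ k))‖ₑ) k) p hp0 hp1 (by simpa only [hg] using hM i)
    simpa only [hg] using this
  choose T K hTm hK hTp hb using hex
  refine ⟨fun x => (∑ i, T i x ^ p) ^ (1 / p), ∑ i, K i, ?_, ?_, ?_, ?_⟩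
  · exact (Finset.measurable_sum _ fun i _ => (hTm i).pow_const p).pow_const _
  · exact ENNReal.sum_ne_top.2 fun i _ => hK i
  · have : ∀ x, ((∑ i, T i x ^ p) ^ (1 / p)) ^ p = ∑ i, T i x ^ p := by
      intro x
      rw [← ENNReal.rpow_mul, one_div_mul_cancel hp0.ne', ENNReal.rpow_one]
    simp only [this]
    rw [lintegral_finsetSum _ fun i _ => (hTm i).pow_const p]
    exact ENNReal.sum_ne_top.2 fun i _ => hTp i
  · intro j x l y hl hy i
    refine le_min (((hb i j x l y hl hy).1).trans ?_) (((hb i j x l y hl hy).2).trans ?_)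
    · calc T i x = (T i x ^ p) ^ (1 / p) := by
            rw [← ENNReal.rpow_mul, mul_one_div_cancel hp0.ne', ENNReal.rpow_one]
        _ ≤ _ := by
            refine ENNReal.rpow_le_rpow ?_ (by positivity)
            exact Finset.single_le_sum (f := fun i => T i x ^ p) (fun _ _ => zero_le) (Finset.mem_univ i)
    · gcongr
      exact Finset.single_le_sum (f := K) (fun _ _ => zero_le) (Finset.mem_univ i)

lemma tsum_half : ∑' j : ℕ, (2⁻¹ : ℝ≥0∞) ^ j = 2 := by
  rw [ENNReal.tsum_geometric, ENNReal.one_sub_inv_two, inv_inv]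

lemma half_pow_mul (j : ℕ) : (2⁻¹ : ℝ≥0∞) ^ j * 2 ^ j = 1 := by
  rw [← mul_pow, ENNReal.inv_mul_cancel (by norm_num) (by norm_num), one_pow]

lemma geom_head (q : ℝ) (hq : 1 < q) : ∃ c : ℝ≥0∞, c ≠ ⊤ ∧ ∀ J : ℕ,
    ∑ j ∈ Finset.range (J + 1), (2⁻¹ : ℝ≥0∞) ^ j * ((2:ℝ≥0∞) ^ j) ^ q ≤ c * ((2:ℝ≥0∞) ^ J) ^ (q - 1) := by
  set b : ℝ := 2 ^ (q - 1) with hb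
  have hb1 : 1 < b := Real.one_lt_rpow (by norm_num) (by linarith)
  have hb0 : 0 < b := by linarith
  have hbE : ∀ j : ℕ, ((2:ℝ≥0∞) ^ j) ^ (q - 1) = ENNReal.ofReal (b ^ j) := by
    intro j
    rw [ENNReal.ofReal_pow hb0.le, hb, ← ENNReal.ofReal_rpow_of_pos (by norm_num),
      ← ENNReal.rpow_natCast, ← ENNReal.rpow_mul, mul_comm, ENNReal.rpow_mul, ENNReal.rpow_natCast]
    norm_num
  have hbt : ∀ j : ℕ, (2⁻¹ : ℝ≥0∞) ^ j * ((2:ℝ≥0∞) ^ j) ^ q = ENNReal.ofReal (b ^ j) := by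
    intro j
    rw [← hbE]
    have : ((2:ℝ≥0∞) ^ j) ^ q = 2 ^ j * ((2:ℝ≥0∞) ^ j) ^ (q - 1) := by
      conv_rhs => rw [← ENNReal.rpow_one ((2:ℝ≥0∞) ^ j), ← ENNReal.rpow_mul]
      rw [← ENNReal.rpow_add _ _ (by simp) (by simp)]
      congr 1; ring
    rw [this, ← mul_assoc, half_pow_mul, one_mul]
  refine ⟨ENNReal.ofReal (b / (b - 1)), ENNReal.ofReal_ne_top, fun J => ?_⟩
  simp only [hbt, hbE]
  rw [← ENNReal.ofReal_sum_of_nonneg (fun i _ => by positivity),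
    ← ENNReal.ofReal_mul (by have := sub_pos.2 hb1; positivity)]
  refine ENNReal.ofReal_le_ofReal ?_
  have := sub_pos.2 hb1
  rw [geom_sum_eq hb1.ne', div_mul_eq_mul_div]
  gcongr
  rw [pow_succ]; nlinarith

lemma ennreal_split (F : ℕ → ℝ≥0∞) (k : ℕ) :
    ∑' j, F j = ∑ j ∈ Finset.range k, F j + ∑' j, F (j + k) :=
  (Summable.sum_add_tsum_nat_add' (f := F) (k := k) ENNReal.summable).symm

lemma dyadic (q : ℝ) (hq : 1 < q) (K : ℝ≥0∞) (hK : K ≠ ⊤) : ∃ C : ℝ≥0∞, C ≠ ⊤ ∧ ∀ N : ℝ≥0∞,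
    ∑' j : ℕ, (2⁻¹ : ℝ≥0∞) ^ j * min N (K * ((2:ℝ≥0∞) ^ j) ^ q) ≤ C * N ^ (1 - 1 / q) := by
  obtain ⟨c, hc, hJ⟩ := geom_head q hq
  have hq0 : 0 < q := by linarith
  have he : 0 < 1 - 1 / q := by
    rw [sub_pos, div_lt_one hq0]; exact hq
  refine ⟨2 + K * c, by finiteness, fun N => ?_⟩
  by_cases hN1 : N ≤ 1
  · calc _ ≤ ∑' j : ℕ, (2⁻¹ : ℝ≥0∞) ^ j * N := by
          refine ENNReal.tsum_le_tsum fun j => ?_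
          gcongr; exact min_le_left _ _
      _ = 2 * N := by rw [ENNReal.tsum_mul_right, tsum_half]
      _ ≤ (2 + K * c) * N ^ (1 - 1 / q) := by
          gcongr
          · exact le_self_add
          · conv_lhs => rw [← ENNReal.rpow_one N]
            refine ENNReal.rpow_le_rpow_of_exponent_ge hN1 ?_
            have : 0 < 1 / q := by positivity
            linarith
  push Not at hN1
  by_cases hNt : N = ⊤
  · rw [hNt, ENNReal.top_rpow_of_pos he, ENNReal.mul_top (by simp)]
    exact le_top
  have hN0 : N ≠ 0 := (zero_lt_one.trans hN1).ne'
  obtain ⟨J, hJ1, hJ2⟩ : ∃ J : ℕ, (2:ℝ≥0∞) ^ J ≤ N ^ (1 / q) ∧ N ^ (1 / q) ≤ 2 ^ (J + 1) := by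
    have h1 : 1 ≤ (N ^ (1 / q)).toReal := by
      have := ENNReal.toReal_mono (ENNReal.rpow_ne_top_of_nonneg (by positivity) hNt)
        (ENNReal.one_le_rpow hN1.le (one_div_pos.2 hq0))
      rwa [ENNReal.toReal_one] at this
    obtain ⟨J, a, b⟩ := exists_nat_pow_near h1 (one_lt_two)
    have hM : N ^ (1 / q) = ENNReal.ofReal (N ^ (1 / q)).toReal :=
      (ENNReal.ofReal_toReal (ENNReal.rpow_ne_top_of_nonneg (by positivity) hNt)).symm
    have h2 : ∀ j : ℕ, (2:ℝ≥0∞) ^ j = ENNReal.ofReal (2 ^ j) := by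
      intro j; rw [ENNReal.ofReal_pow (by norm_num)]; norm_num
    refine ⟨J, ?_, ?_⟩
    · rw [hM, h2]; exact ENNReal.ofReal_le_ofReal a
    · rw [hM, h2]; exact ENNReal.ofReal_le_ofReal b.le
  have head : ∑ j ∈ Finset.range (J + 1), (2⁻¹ : ℝ≥0∞) ^ j * min N (K * ((2:ℝ≥0∞) ^ j) ^ q) ≤
      K * c * N ^ (1 - 1 / q) := by
    calc _ ≤ ∑ j ∈ Finset.range (J + 1), K * ((2⁻¹ : ℝ≥0∞) ^ j * ((2:ℝ≥0∞) ^ j) ^ q) := by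
          refine Finset.sum_le_sum fun j _ => ?_
          rw [mul_left_comm]
          gcongr; exact min_le_right _ _
      _ = K * ∑ j ∈ Finset.range (J + 1), ((2⁻¹ : ℝ≥0∞) ^ j * ((2:ℝ≥0∞) ^ j) ^ q) := by
          rw [Finset.mul_sum]
      _ ≤ K * (c * ((2:ℝ≥0∞) ^ J) ^ (q - 1)) := by gcongr; exact hJ J
      _ ≤ K * (c * (N ^ (1 / q)) ^ (q - 1)) := by
          have : 0 ≤ q - 1 := by linarith
          gcongr
      _ = _ := by
          rw [← ENNReal.rpow_mul, mul_assoc]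
          congr 3; field_simp
  have tail : ∑' j : ℕ, (2⁻¹ : ℝ≥0∞) ^ (j + (J + 1)) * min N (K * ((2:ℝ≥0∞) ^ (j + (J + 1))) ^ q) ≤
      2 * N ^ (1 - 1 / q) := by
    calc _ ≤ ∑' j : ℕ, (2⁻¹ : ℝ≥0∞) ^ j * ((2⁻¹ : ℝ≥0∞) ^ (J + 1) * N) := by
          refine ENNReal.tsum_le_tsum fun j => ?_
          rw [pow_add, mul_assoc]
          gcongr; exact min_le_left _ _
      _ = 2 * ((2⁻¹ : ℝ≥0∞) ^ (J + 1) * N) := by rw [ENNReal.tsum_mul_right, tsum_half]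
      _ = 2 * ((2⁻¹ : ℝ≥0∞) ^ (J + 1) * (N ^ (1 / q) * N ^ (1 - 1 / q))) := by
          congr 2
          rw [← ENNReal.rpow_add _ _ hN0 hNt]
          simp
      _ ≤ 2 * ((2⁻¹ : ℝ≥0∞) ^ (J + 1) * (2 ^ (J + 1) * N ^ (1 - 1 / q))) := by gcongr
      _ = _ := by rw [← mul_assoc (_ ^ _) (_ ^ _), half_pow_mul, one_mul]
  have split := ennreal_split (fun j : ℕ =>
    (2⁻¹ : ℝ≥0∞) ^ j * min N (K * ((2:ℝ≥0∞) ^ j) ^ q)) (J + 1)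
  rw [split, add_mul, add_comm (2 * _)]
  exact add_le_add head tail

/-- Summability of the increments. -/
lemma Moll.exists_D {n : ℕ} (hn : 1 ≤ n) {Ψ : ℕ → Sw n} {B : ℝ} (h : Moll Ψ B) (f : Sw n →L[ℝ] ℝ)
    (p : ℝ) (hpn : (n : ℝ) / (n + 1) ≤ p) (hp1 : p ≤ 1)
    (hM : ∀ i, ∫⁻ x, (⨆ k, ‖f (Tr x (Pd (EuclideanSpace.single i 1) (Ψ k)))‖ₑ) ^ p ≠ ⊤) :
    ∃ (D : Eu n → ℝ≥0∞) (s : ℝ), Measurable D ∧ 1 ≤ s ∧ (p * n / (n - p) = s ∨ p * n / (n - p) = 0) ∧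
      ∫⁻ x, D x ^ s ≠ ⊤ ∧
      ∀ x, ∑' j, ‖f (Tr x (Sc (Ψ (j + 1)) (Ψ (j + 1)))) - f (Tr x (Sc (Ψ j) (Ψ j)))‖ₑ ≤ D x := by
  have hn0 : (1:ℝ) ≤ n := by exact_mod_cast hn
  have hp0 : 0 < p := lt_of_lt_of_le (by positivity) hpn
  obtain ⟨N, K, hNm, hK, hNp, hb⟩ := h.grad_all hn f p hp0 hp1 hM
  have hB := h.B_nonneg
  set c := ENNReal.ofReal (4 * n * B) with hc
  have hct : c ≠ ⊤ := ENNReal.ofReal_ne_top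
  have h2 : ∀ j : ℕ, ENNReal.ofReal (2 ^ j) = (2:ℝ≥0∞) ^ j := by
    intro j; rw [ENNReal.ofReal_pow (by norm_num)]; norm_num
  have h3 : ∀ j : ℕ, ENNReal.ofReal ((2 ^ j)⁻¹) = (2⁻¹:ℝ≥0∞) ^ j := by
    intro j; rw [ENNReal.ofReal_inv_of_pos (by positivity), h2, ENNReal.inv_pow]
  have hinc : ∀ j x, ‖f (Tr x (Sc (Ψ (j + 1)) (Ψ (j + 1)))) - f (Tr x (Sc (Ψ j) (Ψ j)))‖ₑ ≤
      c * ((2⁻¹:ℝ≥0∞) ^ j * min (N x) (K * ((2:ℝ≥0∞) ^ j) ^ ((n:ℝ) / p))) := by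
    intro j x
    set m := min (N x) (K * ((2:ℝ≥0∞) ^ j) ^ ((n:ℝ) / p)) with hm
    have hmt : m ≠ ⊤ := by
      refine ne_top_of_le_ne_top ?_ (min_le_right _ _)
      exact ENNReal.mul_ne_top hK (ENNReal.rpow_ne_top_of_nonneg (by positivity) (by simp))
    have := h.incr f j x m.toReal ?_ ENNReal.toReal_nonneg
    · rw [← ofReal_norm, Real.norm_eq_abs]
      refine (ENNReal.ofReal_le_ofReal this).trans (le_of_eq ?_)
      rw [ENNReal.ofReal_mul (by positivity), ENNReal.ofReal_mul (p := (2 ^ j)⁻¹) (by positivity),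
        ENNReal.ofReal_toReal hmt, h3]
    · intro l hl y hy i
      have := hb j x l y hl hy i
      rw [h2, ← hm] at this
      rw [← Real.norm_eq_abs, ← toReal_enorm]
      exact ENNReal.toReal_mono hmt this
  by_cases hpn1 : p = n
  · have hp : p = 1 := by linarith
    refine ⟨fun x => c * (2 * N x), 1, by fun_prop, le_rfl, Or.inr (by rw [hpn1]; simp), ?_, ?_⟩
    · simp only [ENNReal.rpow_one]
      rw [lintegral_const_mul _ (by fun_prop), lintegral_const_mul _ hNm]
      rw [hp] at hNp
      simp only [ENNReal.rpow_one] at hNp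
      finiteness
    · intro x
      calc _ ≤ ∑' j : ℕ, c * ((2⁻¹:ℝ≥0∞) ^ j * N x) := by
            refine ENNReal.tsum_le_tsum fun j => (hinc j x).trans ?_
            gcongr; exact min_le_left _ _
        _ = _ := by rw [ENNReal.tsum_mul_left, ENNReal.tsum_mul_right, tsum_half]
  · have hlt : p < n := lt_of_le_of_ne (by linarith) hpn1
    have hnp : 0 < (n:ℝ) - p := by linarith
    obtain ⟨C, hC, hd⟩ := dyadic ((n:ℝ) / p) ((one_lt_div hp0).2 hlt) K hK
    set s := p * n / (n - p) with hs
    have hs1 : 1 ≤ s := by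
      rw [hs, one_le_div hnp]
      rw [div_le_iff₀ (by positivity)] at hpn
      linarith
    refine ⟨fun x => c * (C * N x ^ (1 - 1 / ((n:ℝ) / p))), s, by fun_prop, hs1, Or.inl rfl, ?_, ?_⟩
    · have : ∀ x, (c * (C * N x ^ (1 - 1 / ((n:ℝ) / p)))) ^ s = (c * C) ^ s * N x ^ p := by
        intro x
        rw [← mul_assoc, ENNReal.mul_rpow_of_nonneg _ _ (by linarith), ← ENNReal.rpow_mul]
        congr 2
        rw [hs]; field_simp
      simp only [this]
      rw [lintegral_const_mul _ (hNm.pow_const p)]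
      exact ENNReal.mul_ne_top (ENNReal.rpow_ne_top_of_nonneg (by linarith) (by finiteness)) hNp
    · intro x
      calc _ ≤ ∑' j : ℕ, c * ((2⁻¹:ℝ≥0∞) ^ j * min (N x) (K * ((2:ℝ≥0∞) ^ j) ^ ((n:ℝ) / p))) :=
            ENNReal.tsum_le_tsum fun j => hinc j x
        _ ≤ _ := by
            rw [ENNReal.tsum_mul_left]
            exact mul_le_mul_right (hd _) _

lemma Sc_integral {n : ℕ} (χ φ : Sw n) : ∫ z, Sc χ φ z = (∫ y, χ y) * ∫ y, φ y := by
  have := integral_convolution (μ := (volume : Measure (Eu n))) (ν := volume)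
    (ContinuousLinearMap.mul ℝ ℝ) χ.integrable φ.integrable
  simpa [convolution_def, Sc_apply] using this

lemma Sc_norm_integral {n : ℕ} (χ φ : Sw n) : ∫ z, ‖Sc χ φ z‖ ≤ (∫ y, ‖χ y‖) * ∫ y, ‖φ y‖ := by
  have h1 := integral_convolution (μ := (volume : Measure (Eu n))) (ν := volume)
    (ContinuousLinearMap.mul ℝ ℝ) χ.integrable.norm φ.integrable.norm
  have h2 := Integrable.integrable_convolution (μ := (volume : Measure (Eu n)))
    (ContinuousLinearMap.mul ℝ ℝ) χ.integrable.norm φ.integrable.norm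
  simp only [ContinuousLinearMap.mul_apply'] at h1
  rw [← h1]
  refine integral_mono (Sc χ φ).integrable.norm h2 fun z => ?_
  simp only [convolution_def, ContinuousLinearMap.mul_apply', Sc_apply]
  refine (norm_integral_le_integral_norm _).trans (le_of_eq ?_)
  simp only [norm_mul]

lemma Sc_supp {n : ℕ} (χ φ : Sw n) (δ : ℝ) (hχ : ∀ y, δ ≤ ‖y‖ → χ y = 0)
    (hφ : ∀ y, δ ≤ ‖y‖ → φ y = 0) (z : Eu n) (hz : 2 * δ ≤ ‖z‖) : Sc χ φ z = 0 := by
  rw [Sc_apply]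
  refine integral_eq_zero_of_ae (Eventually.of_forall fun y => ?_)
  change χ y * φ (z - y) = 0
  by_cases hy : δ ≤ ‖y‖
  · rw [hχ y hy, zero_mul]
  · rw [hφ (z - y), mul_zero]
    have := norm_sub_norm_le z y
    linarith

lemma Moll.tendsto_pair {n : ℕ} {Ψ : ℕ → Sw n} {B : ℝ} (h : Moll Ψ B) (f : Sw n →L[ℝ] ℝ) (φ : Sw n) :
    Tendsto (fun j => ∫ x, φ x * f (Tr x (Sc (Ψ j) (Ψ j)))) atTop (𝓝 (f φ)) := by
  simp only [← f_Sc]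
  obtain ⟨C, hC0, N, hC, -⟩ := order_bound f
  have hB := h.B_nonneg
  choose c hc using fun k m => exists_Dec k m φ
  set A := ∑ k ∈ Finset.range (N + 1), ∑ m ∈ Finset.range (N + 1), 2 ^ k * (B * B) * c k (m + 1) with hA
  have hc0 : ∀ k m, 0 ≤ c k m := fun k m => (hc k m).nonneg
  have hintg : ∀ j, ∫ y, Tr 0 (Sc (Ψ j) (Ψ j)) y = 1 := by
    intro j
    simp only [Tr_apply, zero_sub]
    rw [integral_neg_eq_self (fun y => Sc (Ψ j) (Ψ j) y), Sc_integral, h.int, one_mul]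
  have hnorm : ∀ j, ∫ y, ‖Tr 0 (Sc (Ψ j) (Ψ j)) y‖ ≤ B * B := by
    intro j
    simp only [Tr_apply, zero_sub]
    rw [integral_neg_eq_self (fun y => ‖Sc (Ψ j) (Ψ j) y‖)]
    refine (Sc_norm_integral _ _).trans ?_
    exact mul_le_mul (h.norm j) (h.norm j) (integral_nonneg fun _ => norm_nonneg _) hB
  have key : ∀ j, 1 ≤ j → ‖f (Sc φ (Tr 0 (Sc (Ψ j) (Ψ j)))) - f φ‖ ≤ C * (2 * ((2:ℝ) ^ j)⁻¹ * A) := by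
    intro j hj
    set χ := Tr 0 (Sc (Ψ j) (Ψ j)) with hχ
    rw [Sc_comm, norm_sub_rev, ← map_sub]
    refine hC _ _ fun k m hk hm => ?_
    have hδ : 2 * ((2:ℝ) ^ j)⁻¹ ≤ 1 := by
      have : (2:ℝ) ^ 1 ≤ 2 ^ j := pow_le_pow_right₀ (by norm_num) hj
      rw [← div_eq_mul_inv, div_le_one (by positivity)]
      simpa using this
    have := ((hc k (m + 1)).sub_Sc χ (hintg j) hδ (by
      intro y hy
      rw [hχ, Tr_apply, zero_sub]
      exact Sc_supp _ _ _ (h.supp j) (h.supp j) _ (by rwa [norm_neg]))).seminorm_le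
    refine this.trans ?_
    have h1 : 2 ^ k * (B * B) * c k (m + 1) ≤ A := by
      refine le_trans ?_ (Finset.single_le_sum (f := fun k => ∑ m ∈ Finset.range (N + 1), 2 ^ k * (B * B) * c k (m + 1))
        (fun k _ => Finset.sum_nonneg fun m _ => mul_nonneg (by positivity) (hc0 _ _)) (Finset.mem_range.2 (Nat.lt_succ_of_le hk)))
      exact Finset.single_le_sum (f := fun m => 2 ^ k * (B * B) * c k (m + 1))
        (fun m _ => mul_nonneg (by positivity) (hc0 _ _)) (Finset.mem_range.2 (Nat.lt_succ_of_le hm))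
    calc 2 ^ k * (2 * ((2:ℝ) ^ j)⁻¹) * (∫ y, ‖χ y‖) * c k (m + 1)
        ≤ 2 ^ k * (2 * ((2:ℝ) ^ j)⁻¹) * (B * B) * c k (m + 1) := by
          have := hnorm j
          have := hc0 k (m + 1)
          gcongr
      _ = 2 * ((2:ℝ) ^ j)⁻¹ * (2 ^ k * (B * B) * c k (m + 1)) := by ring
      _ ≤ _ := by gcongr
  rw [tendsto_iff_norm_sub_tendsto_zero]
  refine squeeze_zero' (Eventually.of_forall fun _ => norm_nonneg _)
    ((eventually_ge_atTop 1).mono key) ?_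
  have : Tendsto (fun j : ℕ => ((2:ℝ) ^ j)⁻¹) atTop (𝓝 0) := by
    simpa only [inv_pow] using tendsto_pow_atTop_nhds_zero_of_lt_one (r := (2:ℝ)⁻¹) (by norm_num) (by norm_num)
  simpa using ((this.const_mul 2).mul_const A).const_mul C

lemma le_one_add_rpow (a : ℝ≥0∞) (s : ℝ) (hs : 1 ≤ s) : a ≤ 1 + a ^ s := by
  by_cases h : a ≤ 1
  · exact h.trans le_self_add
  · push Not at h
    refine le_trans ?_ le_add_self
    conv_lhs => rw [← ENNReal.rpow_one a]
    exact ENNReal.rpow_le_rpow_of_exponent_le h.le hs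

lemma Moll.rep {n : ℕ} {Ψ : ℕ → Sw n} {B : ℝ} (hΨ : Moll Ψ B) (f : Sw n →L[ℝ] ℝ)
    (D : Eu n → ℝ≥0∞) (s : ℝ) (hDm : Measurable D) (hs : 1 ≤ s) (hDs : ∫⁻ x, D x ^ s ≠ ⊤)
    (hD : ∀ x, ∑' j, ‖f (Tr x (Sc (Ψ (j + 1)) (Ψ (j + 1)))) - f (Tr x (Sc (Ψ j) (Ψ j)))‖ₑ ≤ D x) :
    ∃ h : Eu n → ℝ, Measurable h ∧
      (∀ (x₀ : Eu n) (r : ℝ), ∫⁻ y in ball x₀ r, ENNReal.ofReal |h y| ^ s ≠ ⊤) ∧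
      LocallyIntegrable h ∧ ∀ φ : Sw n, f φ = ∫ y, h y * φ y := by
  have hs0 : 0 < s := by linarith
  set u : ℕ → Eu n → ℝ := fun j x => f (Tr x (Sc (Ψ j) (Ψ j))) with hu
  have huc : ∀ j, Continuous (u j) := fun j => continuous_gTr f _
  have hDt : ∀ᵐ x, D x < ⊤ := by
    filter_upwards [ae_lt_top (hDm.pow_const s) hDs] with x hx
    by_contra hc
    rw [not_lt_top_iff] at hc
    rw [hc, ENNReal.top_rpow_of_pos hs0] at hx
    exact lt_irrefl _ hx
  have hed : ∀ x j, edist (u j x) (u j.succ x) ≤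
      ‖f (Tr x (Sc (Ψ (j + 1)) (Ψ (j + 1)))) - f (Tr x (Sc (Ψ j) (Ψ j)))‖ₑ := by
    intro x j
    rw [edist_comm, edist_eq_enorm_sub]
  obtain ⟨h, hm, hlim⟩ := measurable_limit_of_tendsto_metrizable_ae (μ := volume) (L := atTop) (f := u)
    (fun j => (huc j).measurable.aemeasurable) (by
      filter_upwards [hDt] with x hx
      refine cauchySeq_tendsto_of_complete ?_
      exact cauchySeq_of_edist_le_of_tsum_ne_top _ (hed x) ((hD x).trans_lt hx).ne)
  obtain ⟨C, hC0, N, -, hCb⟩ := order_bound f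
  choose c hc using fun k m => exists_Dec k m (Sc (Ψ 0) (Ψ 0))
  obtain ⟨A, hA0, hA⟩ : ∃ A : ℝ, 0 ≤ A ∧ ∀ x, |u 0 x| ≤ A * (1 + ‖x‖) ^ N := by
    have hc0 : ∀ k m, 0 ≤ c k m := fun k m => (hc k m).nonneg
    set A := ∑ k ∈ Finset.range (N + 1), ∑ m ∈ Finset.range (N + 1), c k m with hA
    have hA0 : 0 ≤ A := Finset.sum_nonneg fun k _ => Finset.sum_nonneg fun m _ => hc0 k m
    refine ⟨C * A, by positivity, fun x => (hCb _ A (fun k m hk hm => (hc k m).mono ?_) x).trans (le_of_eq (by ring))⟩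
    refine le_trans ?_ (Finset.single_le_sum (f := fun k => ∑ m ∈ Finset.range (N + 1), c k m)
      (fun k _ => Finset.sum_nonneg fun m _ => hc0 _ _) (Finset.mem_range.2 (Nat.lt_succ_of_le hk)))
    exact Finset.single_le_sum (f := fun m => c k m)
      (fun m _ => hc0 _ _) (Finset.mem_range.2 (Nat.lt_succ_of_le hm))
  have huD : ∀ j x, ‖u j x‖ₑ ≤ ENNReal.ofReal (A * (1 + ‖x‖) ^ N) + D x := by
    intro j x
    have h1 : edist (u 0 x) (u j x) ≤ D x := by
      refine (edist_le_range_sum_edist (fun j => u j x) j).trans (le_trans ?_ (hD x))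
      refine le_trans ?_ (ENNReal.sum_le_tsum (Finset.range j))
      exact Finset.sum_le_sum fun i _ => hed x i
    have h2 : ‖u 0 x‖ₑ ≤ ENNReal.ofReal (A * (1 + ‖x‖) ^ N) := by
      rw [← ofReal_norm]; exact ENNReal.ofReal_le_ofReal (hA x)
    have h3 : u j x = u 0 x + (u j x - u 0 x) := by ring
    rw [edist_comm, edist_eq_enorm_sub] at h1
    rw [h3]
    exact (enorm_add_le _ _).trans (add_le_add h2 h1)
  have hhD : ∀ᵐ x, ‖h x‖ₑ ≤ ENNReal.ofReal (A * (1 + ‖x‖) ^ N) + D x := by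
    filter_upwards [hlim] with x hx
    exact le_of_tendsto' hx.enorm fun j => huD j x
  have hball : ∀ (x₀ : Eu n) (r : ℝ), ∫⁻ y in ball x₀ r, ENNReal.ofReal |h y| ^ s ≠ ⊤ := by
    intro x₀ r
    set Q := ENNReal.ofReal (A * (1 + (‖x₀‖ + r)) ^ N) with hQ
    have hb : ∫⁻ y in ball x₀ r, ENNReal.ofReal |h y| ^ s ≤
        ∫⁻ y in ball x₀ r, (2:ℝ≥0∞) ^ (s - 1) * (Q ^ s + D y ^ s) := by
      refine setLIntegral_mono_ae (by fun_prop) ?_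
      filter_upwards [hhD] with y hy hyb
      refine le_trans ?_ (ENNReal.rpow_add_le_mul_rpow_add_rpow Q (D y) hs)
      refine ENNReal.rpow_le_rpow ?_ hs0.le
      rw [← Real.norm_eq_abs, ofReal_norm]
      refine hy.trans (add_le_add_left (ENNReal.ofReal_le_ofReal ?_) _)
      have : ‖y‖ ≤ ‖x₀‖ + r := by
        rw [mem_ball, dist_eq_norm] at hyb
        have := norm_sub_norm_le y x₀
        linarith
      gcongr
    refine ne_top_of_le_ne_top ?_ hb
    rw [lintegral_const_mul _ (by fun_prop), lintegral_add_left (by fun_prop), lintegral_const,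
      Measure.restrict_apply_univ]
    refine ENNReal.mul_ne_top (ENNReal.rpow_ne_top_of_nonneg (by linarith) (by norm_num))
      (ENNReal.add_ne_top.2 ⟨ENNReal.mul_ne_top (ENNReal.rpow_ne_top_of_nonneg hs0.le ENNReal.ofReal_ne_top)
        measure_ball_lt_top.ne, ?_⟩)
    exact ne_top_of_le_ne_top hDs (setLIntegral_le_lintegral _ _)
  refine ⟨h, hm, hball, ?_, ?_⟩
  · intro x
    refine ⟨ball x 1, ball_mem_nhds x one_pos, hm.aestronglyMeasurable, ?_⟩
    rw [hasFiniteIntegral_iff_enorm]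
    have : ∫⁻ y in ball x 1, ‖h y‖ₑ ≤ ∫⁻ y in ball x 1, (1 + ENNReal.ofReal |h y| ^ s) := by
      refine lintegral_mono fun y => ?_
      rw [← ofReal_norm, Real.norm_eq_abs]
      exact le_one_add_rpow _ s hs
    refine this.trans_lt ?_
    rw [lintegral_add_left measurable_const, lintegral_const, Measure.restrict_apply_univ, one_mul]
    exact ENNReal.add_lt_top.2 ⟨measure_ball_lt_top, (hball x 1).lt_top⟩
  · intro φ
    refine tendsto_nhds_unique (hΨ.tendsto_pair f φ) ?_
    obtain ⟨c0, hc0⟩ := exists_Dec 0 0 φ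
    have hφb : ∀ y, ‖φ y‖ ≤ c0 := fun y => by simpa using hc0 y
    simp only [mul_comm (h _)]
    refine tendsto_integral_of_dominated_convergence
      (fun x => A * ((1 + ‖x‖) ^ N * ‖φ x‖) + (‖φ x‖ + c0 * (D x ^ s).toReal)) ?_ ?_ ?_ ?_
    · intro j
      exact (φ.continuous.mul (huc j)).aestronglyMeasurable
    · exact ((integrable_weight N φ).const_mul A).add (φ.integrable.norm.add
        ((integrable_toReal_of_lintegral_ne_top (hDm.pow_const s).aemeasurable hDs).const_mul c0))
    · intro j
      filter_upwards [hDt] with x hx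
      have h1 : ‖u j x‖ ≤ A * (1 + ‖x‖) ^ N + (1 + (D x ^ s).toReal) := by
        have hDst : D x ^ s ≠ ⊤ := ENNReal.rpow_ne_top_of_nonneg hs0.le hx.ne
        have h2 := (huD j x).trans (add_le_add_right (le_one_add_rpow (D x) s hs) _)
        have h3 := ENNReal.toReal_mono (by finiteness) h2
        rw [toReal_enorm, ENNReal.toReal_add (by finiteness) (by finiteness),
          ENNReal.toReal_add (by finiteness) hDst, ENNReal.toReal_ofReal (by positivity)] at h3
        simpa using h3
      rw [norm_mul]
      have h4 : ‖φ x‖ * (D x ^ s).toReal ≤ c0 * (D x ^ s).toReal := by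
        gcongr; exact hφb x
      calc ‖φ x‖ * ‖u j x‖ ≤ ‖φ x‖ * (A * (1 + ‖x‖) ^ N + (1 + (D x ^ s).toReal)) := by gcongr
        _ = A * ((1 + ‖x‖) ^ N * ‖φ x‖) + (‖φ x‖ + ‖φ x‖ * (D x ^ s).toReal) := by ring
        _ ≤ _ := by gcongr
    · filter_upwards [hlim] with x hx
      exact hx.const_mul _

lemma exists_Moll {n : ℕ} (ψ : Eu n → ℝ) (hψ : ContDiff ℝ (⊤ : ℕ∞) ψ)
    (hψsupp : tsupport ψ ⊆ ball 0 1) (hψint : ∫ x, ψ x = 1) :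
    ∃ Ψ : ℕ → Sw n, (∀ k z, Ψ k z = (2 ^ k) ^ n * ψ ((2:ℝ) ^ k • z)) ∧ Moll Ψ (∫ x, ‖ψ x‖) := by
  have hz : ∀ z, 1 ≤ ‖z‖ → ψ z = 0 := by
    intro z hz
    by_contra hne
    have := hψsupp (subset_tsupport ψ (Function.mem_support.2 hne))
    rw [mem_ball, dist_zero_right] at this
    linarith
  have hcs : ∀ k : ℕ, HasCompactSupport (fun z : Eu n => ((2:ℝ) ^ k) ^ n * ψ ((2:ℝ) ^ k • z)) := by
    intro k
    refine HasCompactSupport.intro (isCompact_closedBall (0:Eu n) 1) fun y hy => ?_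
    simp only [mem_closedBall, dist_zero_right, not_le] at hy
    rw [hz, mul_zero]
    rw [norm_smul, Real.norm_eq_abs, abs_of_pos (by positivity)]
    have : (1:ℝ) ≤ 2 ^ k := one_le_pow₀ (by norm_num)
    nlinarith
  have hcd : ∀ k : ℕ, ContDiff ℝ ∞ (fun z : Eu n => ((2:ℝ) ^ k) ^ n * ψ ((2:ℝ) ^ k • z)) :=
    fun k => contDiff_const.mul (hψ.comp (contDiff_const_smul _))
  have hcs0 : HasCompactSupport ψ := by
    refine HasCompactSupport.intro (isCompact_closedBall (0:Eu n) 1) fun y hy => ?_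
    simp only [mem_closedBall, dist_zero_right, not_le] at hy
    exact hz y hy.le
  set ψ0 : Sw n := hcs0.toSchwartzMap hψ with hψ0
  have hψ0a : (ψ0 : Eu n → ℝ) = ψ := rfl
  have hΨa : ∀ k z, (hcs k).toSchwartzMap (hcd k) z = (2 ^ k) ^ n * ψ ((2:ℝ) ^ k • z) := fun _ _ => rfl
  refine ⟨fun k => (hcs k).toSchwartzMap (hcd k), hΨa, ?_, ?_, ?_, ?_⟩
  · intro k
    simp only [hΨa]
    rw [integral_const_mul, Measure.integral_comp_smul_of_nonneg volume (fun x => ψ x) (hR := by positivity), finrank_euclideanSpace_fin,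
      hψint, smul_eq_mul, mul_one, mul_inv_cancel₀ (by positivity)]
  · intro k z hzk
    rw [hΨa, hz, mul_zero]
    rw [norm_smul, Real.norm_eq_abs, abs_of_pos (by positivity)]
    rwa [inv_le_iff_one_le_mul₀' (by positivity)] at hzk
  · intro k
    simp only [hΨa, norm_mul]
    rw [integral_const_mul, Measure.integral_comp_smul_of_nonneg volume (fun x => ‖ψ x‖) (hR := by positivity),
      finrank_euclideanSpace_fin, smul_eq_mul, Real.norm_eq_abs, abs_of_pos (by positivity), ← mul_assoc,
      mul_inv_cancel₀ (by positivity), one_mul]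
  · intro k' i
    obtain ⟨C, hC⟩ := exists_Dec k' i ψ0
    refine ⟨C, fun k z => ?_⟩
    have e : iteratedFDeriv ℝ i ((hcs k).toSchwartzMap (hcd k)) z =
        (((2:ℝ) ^ k) ^ n) • ((2:ℝ) ^ k) ^ i • iteratedFDeriv ℝ i ψ ((2:ℝ) ^ k • z) := by
      have hi : ContDiff ℝ i ψ := contDiff_infty.1 hψ i
      have e1 : ((hcs k).toSchwartzMap (hcd k) : Eu n → ℝ) =
          fun z => (((2:ℝ) ^ k) ^ n) • (fun z => ψ ((2:ℝ) ^ k • z)) z := rfl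
      rw [e1, iteratedFDeriv_const_smul_apply', iteratedFDeriv_comp_const_smul _ hi]
      exact (hi.comp (contDiff_const_smul _)).contDiffAt
    rw [e, norm_smul, norm_smul, Real.norm_eq_abs, abs_of_pos (by positivity), Real.norm_eq_abs,
      abs_of_pos (by positivity)]
    have h1 := hC ((2:ℝ) ^ k • z)
    rw [hψ0a] at h1
    have h2 : ‖z‖ ≤ ‖(2:ℝ) ^ k • z‖ := by
      rw [norm_smul, Real.norm_eq_abs, abs_of_pos (by positivity)]
      exact le_mul_of_one_le_left (norm_nonneg _) (one_le_pow₀ (by norm_num))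
    calc _ = ((2:ℝ) ^ k) ^ n * ((2:ℝ) ^ k) ^ i * ((1 + ‖z‖) ^ k' * ‖iteratedFDeriv ℝ i ψ ((2:ℝ) ^ k • z)‖) := by ring
      _ ≤ ((2:ℝ) ^ k) ^ n * ((2:ℝ) ^ k) ^ i * ((1 + ‖(2:ℝ) ^ k • z‖) ^ k' * ‖iteratedFDeriv ℝ i ψ ((2:ℝ) ^ k • z)‖) := by
          gcongr
      _ ≤ ((2:ℝ) ^ k) ^ n * ((2:ℝ) ^ k) ^ i * C := by gcongr
      _ = _ := by rw [pow_mul, pow_add]; ring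

lemma smooth_max_le {n : ℕ} (ψ : Eu n → ℝ) (f : Sw n →L[ℝ] ℝ) (Ψ : ℕ → Sw n)
    (hΨ : ∀ k z, Ψ k z = (2 ^ k) ^ n * ψ ((2:ℝ) ^ k • z)) (hd : Differentiable ℝ ψ) (i : Fin n) (x : Eu n) :
    (⨆ k, ‖f (Tr x (Pd (EuclideanSpace.single i 1) (Ψ k)))‖ₑ) ≤ distrSmoothMax n ψ f i x := by
  refine iSup_le fun k => ?_
  unfold distrSmoothMax
  refine le_trans ?_ (le_iSup _ (⟨((2:ℝ) ^ k)⁻¹, by positivity⟩ : {s : ℝ // 0 < s}))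
  have hφ : ∀ y, Tr x (Pd (EuclideanSpace.single i 1) (Ψ k)) y = ((((2:ℝ) ^ k)⁻¹)⁻¹) ^ (n + 1) *
      fderiv ℝ ψ ((((2:ℝ) ^ k)⁻¹)⁻¹ • (x - y)) (EuclideanSpace.single i 1) := by
    intro y
    rw [Tr_apply, Pd_apply, inv_inv]
    have e : (Ψ k : Eu n → ℝ) = fun z => ((2:ℝ) ^ k) ^ n • ψ ((2:ℝ) ^ k • z) := by
      ext z; exact hΨ k z
    rw [e, fderiv_fun_const_smul, fderiv_comp_smul]
    · simp only [smul_apply, smul_eq_mul]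
      ring
    · exact (hd _).comp _ (by fun_prop)
  refine le_trans (le_of_eq ?_) (le_iSup _ (⟨Tr x (Pd (EuclideanSpace.single i 1) (Ψ k)), hφ⟩ :
    {φ : SchwartzMap (EuclideanSpace ℝ (Fin n)) ℝ // ∀ y, φ y = ((((2:ℝ) ^ k)⁻¹)⁻¹) ^ (n + 1) *
          fderiv ℝ ψ ((((2:ℝ) ^ k)⁻¹)⁻¹ • (x - y)) (EuclideanSpace.single i 1)}))
  rw [← Real.norm_eq_abs, ofReal_norm]


/-- **Proposition 2.1.** For `n/(n+1) ≤ p ≤ 1` and `p* = pn/(n-p)`, a tempered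
distribution whose derivatives lie in `H^p(ℝⁿ)` (expressed via finiteness of the `L^p`
quasinorm of the smooth maximal functions of the `D_j f`) is represented by a function
in `L^{p*}_loc(ℝⁿ)`; in particular by a locally integrable function. -/
theorem hardy_sobolev_loc_integrable_representation
    (n : ℕ) (hn : 1 ≤ n) (p : ℝ) (hp1 : (n : ℝ) / (n + 1) ≤ p) (hp2 : p ≤ 1)
    (pstar : ℝ) (hpstar : pstar = p * n / (n - p))
    (ψ : EuclideanSpace ℝ (Fin n) → ℝ) (hψ : ContDiff ℝ (⊤ : ℕ∞) ψ)
    (hψsupp : tsupport ψ ⊆ ball 0 1) (hψint : ∫ x, ψ x = 1)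
    (f : SchwartzMap (EuclideanSpace ℝ (Fin n)) ℝ →L[ℝ] ℝ)
    (hf : ∀ j : Fin n, (∫⁻ x, distrSmoothMax n ψ f j x ^ p) ^ (1 / p) ≠ ⊤) :
    ∃ h : EuclideanSpace ℝ (Fin n) → ℝ, Measurable h ∧
      (∀ (x₀ : EuclideanSpace ℝ (Fin n)) (r : ℝ),
        ∫⁻ y in ball x₀ r, ENNReal.ofReal |h y| ^ pstar ≠ ⊤) ∧
      LocallyIntegrable h ∧
      ∀ φ : SchwartzMap (EuclideanSpace ℝ (Fin n)) ℝ, f φ = ∫ y, h y * φ y := by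
  have hn0 : (1:ℝ) ≤ n := by exact_mod_cast hn
  have hp0 : 0 < p := lt_of_lt_of_le (by positivity) hp1
  obtain ⟨Ψ, hΨ, hM⟩ := exists_Moll ψ hψ hψsupp hψint
  obtain ⟨D, s, hDm, hs, hps, hDs, hD⟩ := hM.exists_D hn f p hp1 hp2 (by
    intro i
    have h1 : ∫⁻ x, distrSmoothMax n ψ f i x ^ p ≠ ⊤ := by
      intro hc
      refine hf i ?_
      rw [hc, ENNReal.top_rpow_of_pos (by positivity)]
    refine ne_top_of_le_ne_top h1 (lintegral_mono fun x => ?_)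
    refine ENNReal.rpow_le_rpow ?_ hp0.le
    exact smooth_max_le ψ f Ψ hΨ (hψ.differentiable (by simp)) i x)
  obtain ⟨h, hm, hb, hloc, hrep⟩ := hM.rep f D s hDm hs hDs hD
  refine ⟨h, hm, fun x₀ r => ?_, hloc, hrep⟩
  rw [← hpstar] at hps
  rcases hps with hps | hps
  · rw [hps]; exact hb x₀ r
  · rw [hps]
    simp only [ENNReal.rpow_zero]
    rw [lintegral_const, Measure.restrict_apply_univ, one_mul]
    exact measure_ball_lt_top.ne
end
end

section
/- Let n ≥ 1, let Q ⊆ ℝⁿ be a bounded open axis-parallel cube, and let φ : ℝⁿ → ℝ be smooth with compact support contained in Q. Then there exist smooth functions ψ₁, …, ψₙ : ℝⁿ → ℝ, each with compact support contained in Q, such that φ = Σ_{k=1}^n ∂_k ψ_k, if and only if ∫_{ℝⁿ} φ dm = 0. -/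
open MeasureTheory Metric Set ENNReal NNReal

noncomputable section

/-- The partial derivative `∂_j φ` in the `j`-th coordinate direction. -/
def pderivIdx (n : ℕ) (j : Fin n) (φ : EuclideanSpace ℝ (Fin n) → ℝ)
    (x : EuclideanSpace ℝ (Fin n)) : ℝ :=
  fderiv ℝ φ x (EuclideanSpace.single j 1)

/-- Replace the `k`-th coordinate of `x` by `t`. -/
def updc {n : ℕ} (k : Fin n) (x : EuclideanSpace ℝ (Fin n)) (t : ℝ) :
    EuclideanSpace ℝ (Fin n) :=
  x + (t - x k) • EuclideanSpace.single k (1 : ℝ)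

lemma updc_apply {n : ℕ} (k : Fin n) (x : EuclideanSpace ℝ (Fin n)) (t : ℝ) (i : Fin n) :
    updc k x t i = if i = k then t else x i := by
  unfold updc
  by_cases h : i = k
  · subst h; simp
  · simp [h]

lemma updc_updc {n : ℕ} (k : Fin n) (x : EuclideanSpace ℝ (Fin n)) (t u : ℝ) :
    updc k (updc k x t) u = updc k x u := by
  ext i
  simp only [updc_apply]
  split_ifs <;> rfl

lemma updc_self {n : ℕ} (k : Fin n) (x : EuclideanSpace ℝ (Fin n)) :
    updc k x (x k) = x := by
  simp [updc]

lemma updc_comm {n : ℕ} {k j : Fin n} (h : k ≠ j) (x : EuclideanSpace ℝ (Fin n)) (t u : ℝ) :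
    updc k (updc j x t) u = updc j (updc k x u) t := by
  ext i
  simp only [updc_apply]
  split_ifs with h1 h2
  · exact absurd (h1.symm.trans h2) h
  all_goals rfl

lemma contDiff_coord {n : ℕ} (k : Fin n) :
    ContDiff ℝ (⊤ : ℕ∞) (fun x : EuclideanSpace ℝ (Fin n) => x k) :=
  (EuclideanSpace.proj (𝕜 := ℝ) k : EuclideanSpace ℝ (Fin n) →L[ℝ] ℝ).contDiff

lemma contDiff_updc {n : ℕ} (k : Fin n) :
    ContDiff ℝ (⊤ : ℕ∞) (fun p : EuclideanSpace ℝ (Fin n) × ℝ => updc k p.1 p.2) := by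
  unfold updc
  have h1 : ContDiff ℝ (⊤ : ℕ∞) (fun p : EuclideanSpace ℝ (Fin n) × ℝ => p.1 k) :=
    (contDiff_coord k).comp contDiff_fst
  exact contDiff_fst.add ((contDiff_snd.sub h1).smul contDiff_const)

lemma contDiff_updc_right {n : ℕ} (k : Fin n) (x : EuclideanSpace ℝ (Fin n)) :
    ContDiff ℝ (⊤ : ℕ∞) (fun t : ℝ => updc k x t) :=
  (contDiff_updc k).comp (contDiff_const.prodMk contDiff_id)

lemma contDiff_conv {n : ℕ} (k : Fin n) (w : ℝ → ℝ) (hw : LocallyIntegrable w)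
    (F : EuclideanSpace ℝ (Fin n) → ℝ) (hF : ContDiff ℝ (⊤ : ℕ∞) F) (c d : ℝ)
    (hs : ∀ x, F x ≠ 0 → x k ∈ Icc c d) :
    ContDiff ℝ (⊤ : ℕ∞) (fun x : EuclideanSpace ℝ (Fin n) =>
      ∫ t, w (x k - t) * F (updc k x t)) := by
  have hg : ContDiff ℝ (⊤ : ℕ∞)
      (fun p : EuclideanSpace ℝ (Fin n) × ℝ => F (updc k p.1 p.2)) := hF.comp (contDiff_updc k)
  have h := contDiffOn_convolution_right_with_param (μ := (volume : Measure ℝ)) (f := w)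
    (n := ⊤) (ContinuousLinearMap.mul ℝ ℝ)
    (g := fun (p : EuclideanSpace ℝ (Fin n)) (t : ℝ) => F (updc k p t))
    (s := univ) (k := Icc c d) isOpen_univ isCompact_Icc
    (by
      intro p x _ hx
      by_contra hne
      have := hs _ hne
      rw [updc_apply, if_pos rfl] at this
      exact hx this) hw hg.contDiffOn
  rw [univ_prod_univ, contDiffOn_univ] at h
  have h2 := h.comp (contDiff_id.prodMk (contDiff_coord k))
  convert h2 using 1
  ext x
  simp [convolution_eq_swap]

/-- Averaging in direction `k`. -/
def avg {n : ℕ} (k : Fin n) (F : EuclideanSpace ℝ (Fin n) → ℝ)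
    (x : EuclideanSpace ℝ (Fin n)) : ℝ := ∫ t, F (updc k x t)

/-- Antiderivative in direction `k`. -/
def antid {n : ℕ} (k : Fin n) (F : EuclideanSpace ℝ (Fin n) → ℝ)
    (x : EuclideanSpace ℝ (Fin n)) : ℝ := ∫ t in Iic (x k), F (updc k x t)

lemma contDiff_avg {n : ℕ} (k : Fin n) 
    (F : EuclideanSpace ℝ (Fin n) → ℝ) (hF : ContDiff ℝ (⊤ : ℕ∞) F) (c d : ℝ)
    (hs : ∀ x, F x ≠ 0 → x k ∈ Icc c d) : ContDiff ℝ (⊤ : ℕ∞) (avg k F) := by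
  have := contDiff_conv k (fun _ => 1) (locallyIntegrable_const _) F hF c d hs
  simp only [one_mul] at this
  exact this

lemma contDiff_antid {n : ℕ} (k : Fin n) 
    (F : EuclideanSpace ℝ (Fin n) → ℝ) (hF : ContDiff ℝ (⊤ : ℕ∞) F) (c d : ℝ)
    (hs : ∀ x, F x ≠ 0 → x k ∈ Icc c d) : ContDiff ℝ (⊤ : ℕ∞) (antid k F) := by
  have := contDiff_conv k ((Ici (0:ℝ)).indicator (fun _ => 1))
    ((locallyIntegrable_const _).indicator measurableSet_Ici) F hF c d hs
  convert this using 1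
  ext x
  rw [antid, ← integral_indicator measurableSet_Iic]
  congr 1
  ext t
  by_cases h : t ≤ x k <;> simp [indicator, h]

lemma integrable_line {n : ℕ} (k : Fin n) 
    (F : EuclideanSpace ℝ (Fin n) → ℝ) (hF : ContDiff ℝ (⊤ : ℕ∞) F) (c d : ℝ)
    (hs : ∀ x, F x ≠ 0 → x k ∈ Icc c d) (x : EuclideanSpace ℝ (Fin n)) :
    Integrable (fun t => F (updc k x t)) := by
  apply (hF.comp (contDiff_updc_right k x)).continuous.integrable_of_hasCompactSupport
  apply HasCompactSupport.intro (isCompact_Icc (a := c) (b := d))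
  intro t ht
  by_contra hne
  have := hs _ hne
  rw [updc_apply, if_pos rfl] at this
  exact ht this

lemma pderiv_antid {n : ℕ} (k : Fin n) 
    (F : EuclideanSpace ℝ (Fin n) → ℝ) (hF : ContDiff ℝ (⊤ : ℕ∞) F) (c d : ℝ)
    (hs : ∀ x, F x ≠ 0 → x k ∈ Icc c d) (x : EuclideanSpace ℝ (Fin n)) :
    pderivIdx n k (antid k F) x = F x := by
  have hd : DifferentiableAt ℝ (antid k F) (updc k x (x k)) :=
    (contDiff_antid k F hF c d hs).contDiffAt.differentiableAt (by simp)
  have hu : HasDerivAt (fun t => updc k x t) (EuclideanSpace.single k (1:ℝ)) (x k) := by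
    unfold updc
    have := (((hasDerivAt_id (x k)).sub_const (x k)).smul_const
      (EuclideanSpace.single k (1:ℝ))).const_add x
    simpa using this
  have h1 := hd.hasFDerivAt.comp_hasDerivAt (x k) hu
  rw [updc_self] at h1
  have hint := integrable_line k F hF c d hs x
  have hcont : Continuous (fun t => F (updc k x t)) :=
    (hF.comp (contDiff_updc_right k x)).continuous
  have h2 : HasDerivAt (fun τ => antid k F (updc k x τ)) (F x) (x k) := by
    have h3 : (fun τ => antid k F (updc k x τ)) =
        fun τ => (∫ t in Iic (0:ℝ), F (updc k x t)) + ∫ t in (0:ℝ)..τ, F (updc k x t) := by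
      ext τ
      rw [← intervalIntegral.integral_Iic_sub_Iic hint.integrableOn hint.integrableOn]
      simp [antid, updc_apply, updc_updc]
    rw [h3]
    have h4 := (hcont.integral_hasStrictDerivAt 0 (x k)).hasDerivAt.const_add
      (∫ t in Iic (0:ℝ), F (updc k x t))
    rw [updc_self] at h4
    exact h4
  exact h1.unique h2

lemma antid_supp {n : ℕ} (k : Fin n) 
    (F : EuclideanSpace ℝ (Fin n) → ℝ) (c d : Fin n → ℝ)
    (hs : ∀ x, F x ≠ 0 → ∀ i, x i ∈ Icc (c i) (d i)) (h0 : ∀ x, avg k F x = 0)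
    (x : EuclideanSpace ℝ (Fin n)) (hx : antid k F x ≠ 0) (i : Fin n) :
    x i ∈ Icc (c i) (d i) := by
  by_contra hne
  apply hx
  by_cases hik : i = k
  · subst hik
    have hcase : x i < c i ∨ d i < x i := by
      by_contra! h
      exact hne h
    rcases hcase with h | h
    · unfold antid
      apply setIntegral_eq_zero_of_forall_eq_zero
      intro t ht
      by_contra hF
      have := (hs _ hF i).1
      rw [updc_apply, if_pos rfl] at this
      exact absurd ht (by simp; linarith)
    · rw [← h0 x]
      unfold antid avg
      apply setIntegral_eq_integral_of_forall_compl_eq_zero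
      intro t ht
      by_contra hF
      have := (hs _ hF i).2
      rw [updc_apply, if_pos rfl] at this
      exact ht (by simp; linarith)
  · unfold antid
    apply setIntegral_eq_zero_of_forall_eq_zero
    intro t ht
    by_contra hF
    have := hs _ hF i
    rw [updc_apply, if_neg hik] at this
    exact hne this

lemma avg_supp {n : ℕ} (k : Fin n) 
    (F : EuclideanSpace ℝ (Fin n) → ℝ) (c d : Fin n → ℝ)
    (hs : ∀ x, F x ≠ 0 → ∀ i, x i ∈ Icc (c i) (d i)) 
    (x : EuclideanSpace ℝ (Fin n)) (hx : avg k F x ≠ 0) (i : Fin n) (hik : i ≠ k) :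
    x i ∈ Icc (c i) (d i) := by
  by_contra hne
  apply hx
  unfold avg
  have : ∀ t, F (updc k x t) = 0 := by
    intro t
    by_contra hF
    have := hs _ hF i
    rw [updc_apply, if_neg hik] at this
    exact hne this
  simp [this]

lemma key {n : ℕ} (c d : Fin n → ℝ) (η : Fin n → ℝ → ℝ)
    (hη : ∀ i, ContDiff ℝ (⊤ : ℕ∞) (η i)) (hηs : ∀ i t, η i t ≠ 0 → t ∈ Icc (c i) (d i))
    (hη1 : ∀ i, ∫ t, η i t = 1)
    (φ : EuclideanSpace ℝ (Fin n) → ℝ) (hφ : ContDiff ℝ (⊤ : ℕ∞) φ)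
    (hs : ∀ x, φ x ≠ 0 → ∀ i, x i ∈ Icc (c i) (d i)) (S : Finset (Fin n)) :
    ∃ (ψ : Fin n → EuclideanSpace ℝ (Fin n) → ℝ) (f g : EuclideanSpace ℝ (Fin n) → ℝ),
      (∀ k, ContDiff ℝ (⊤ : ℕ∞) (ψ k) ∧ ∀ x, ψ k x ≠ 0 → ∀ i, x i ∈ Icc (c i) (d i)) ∧
      ContDiff ℝ (⊤ : ℕ∞) f ∧ (∀ x, f x ≠ 0 → ∀ i, x i ∈ Icc (c i) (d i)) ∧
      (∀ x, φ x = ∑ k ∈ S, pderivIdx n k (ψ k) x + f x) ∧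
      (∀ x, f x = (∏ i ∈ S, η i (x i)) * g x) ∧
      (∀ k ∈ S, ∀ x t, g (updc k x t) = g x) := by
  induction S using Finset.induction_on with
  | empty =>
    refine ⟨fun _ _ => 0, φ, φ, ?_, hφ, hs, by simp, by simp, by simp⟩
    intro k
    exact ⟨contDiff_const, by simp⟩
  | insert k S hk ih =>
    obtain ⟨ψ, f, g, hψ, hf, hfs, hsum, hfg, hg⟩ := ih
    have hA := contDiff_avg k f hf (c k) (d k) (fun x hx => hfs x hx k)
    set f' : EuclideanSpace ℝ (Fin n) → ℝ := fun x => η k (x k) * avg k f x with hf'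
    have hf'c : ContDiff ℝ (⊤ : ℕ∞) f' := ((hη k).comp (contDiff_coord k)).mul hA
    have hf's : ∀ x, f' x ≠ 0 → ∀ i, x i ∈ Icc (c i) (d i) := by
      intro x hx i
      by_cases hik : i = k
      · subst hik
        exact hηs _ _ (left_ne_zero_of_mul hx)
      · exact avg_supp k f c d hfs x (right_ne_zero_of_mul hx) i hik
    set F : EuclideanSpace ℝ (Fin n) → ℝ := fun x => f x - f' x with hFdef
    have hFc : ContDiff ℝ (⊤ : ℕ∞) F := hf.sub hf'c
    have hFs : ∀ x, F x ≠ 0 → ∀ i, x i ∈ Icc (c i) (d i) := by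
      intro x hx i
      by_cases h : f x = 0
      · refine hf's x (fun h' => hx ?_) i
        simp only [hFdef, h, h', sub_zero]
      · exact hfs x h i
    have hF0 : ∀ x, avg k F x = 0 := by
      intro x
      have e1 : avg k F x = avg k f x - avg k f' x := by
        unfold avg
        exact integral_sub (integrable_line k f hf (c k) (d k) (fun x hx => hfs x hx k) x)
          (integrable_line k f' hf'c (c k) (d k) (fun x hx => hf's x hx k) x)
      have e2 : avg k f' x = avg k f x := by
        have : ∀ t, f' (updc k x t) = η k t * avg k f x := by
          intro t
          simp only [hf', updc_apply, avg, updc_updc, if_true]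
        rw [avg]
        simp_rw [this]
        rw [integral_mul_const, hη1, one_mul]
      rw [e1, e2, sub_self]
    refine ⟨Function.update ψ k (antid k F), f', avg k g, ?_, hf'c, hf's, ?_, ?_, ?_⟩
    · intro j
      by_cases hj : j = k
      · subst hj
        rw [Function.update_self]
        exact ⟨contDiff_antid j F hFc (c j) (d j) (fun x hx => hFs x hx j),
          antid_supp j F c d hFs hF0⟩
      · rw [Function.update_of_ne hj]
        exact hψ j
    · intro x
      rw [Finset.sum_insert hk, Function.update_self,
        pderiv_antid k F hFc (c k) (d k) (fun x hx => hFs x hx k), hsum x]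
      have : ∑ j ∈ S, pderivIdx n j (Function.update ψ k (antid k F) j) x
          = ∑ j ∈ S, pderivIdx n j (ψ j) x := by
        apply Finset.sum_congr rfl
        intro j hj
        rw [Function.update_of_ne (fun h : j = k => hk (h ▸ hj))]
      rw [this]
      simp only [hFdef]
      ring
    · intro x
      rw [Finset.prod_insert hk, mul_assoc]
      simp only [hf']
      congr 1
      unfold avg
      rw [← integral_const_mul]
      congr 1
      ext t
      rw [hfg]
      congr 1
      apply Finset.prod_congr rfl
      intro j hj
      rw [updc_apply, if_neg (fun h : j = k => hk (h ▸ hj))]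
    · intro j hj x t
      unfold avg
      rcases Finset.mem_insert.1 hj with rfl | hj
      · simp_rw [updc_updc]
      · have hne : k ≠ j := fun h => hk (h ▸ hj)
        simp_rw [updc_comm hne, hg j hj]

lemma const_of_updc {n : ℕ} (g : EuclideanSpace ℝ (Fin n) → ℝ)
    (hg : ∀ k x t, g (updc k x t) = g x) (x : EuclideanSpace ℝ (Fin n)) : g x = g 0 := by
  have h : ∀ S : Finset (Fin n), ∃ y : EuclideanSpace ℝ (Fin n), g y = g x ∧ ∀ i ∈ S, y i = 0 := by
    intro S
    induction S using Finset.induction_on with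
    | empty => exact ⟨x, rfl, by simp⟩
    | insert k S hk ih =>
      obtain ⟨y, hy, h0⟩ := ih
      refine ⟨updc k y 0, by rw [hg, hy], ?_⟩
      intro i hi
      rw [updc_apply]
      split_ifs with h
      · rfl
      · exact h0 i ((Finset.mem_insert.1 hi).resolve_left h)
  obtain ⟨y, hy, h0⟩ := h Finset.univ
  have : y = 0 := by
    ext i
    simpa using h0 i (Finset.mem_univ i)
  rw [← hy, this]

lemma pderiv_integral {n : ℕ} (k : Fin n) (f : EuclideanSpace ℝ (Fin n) → ℝ)
    (hf : ContDiff ℝ (⊤ : ℕ∞) f) (hc : HasCompactSupport f) :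
    Integrable (pderivIdx n k f) ∧ ∫ x, pderivIdx n k f x = 0 := by
  have hi : Integrable (fun x => fderiv ℝ f x (EuclideanSpace.single k 1)) := by
    apply Continuous.integrable_of_hasCompactSupport
    · exact (hf.continuous_fderiv (by simp)).clm_apply continuous_const
    · exact hc.fderiv_apply (𝕜 := ℝ) _
  refine ⟨hi, ?_⟩
  have := integral_mul_fderiv_eq_neg_fderiv_mul_of_integrable (μ := volume) (f := fun _ => (1:ℝ))
    (g := f) (v := EuclideanSpace.single k (1:ℝ)) (by simp) (by simpa using hi)
    (by simpa using hf.continuous.integrable_of_hasCompactSupport hc) (by simp)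
    (fun x _ => hf.contDiffAt.differentiableAt (by simp))
  simpa [pderivIdx] using this

lemma compact_in_Ioo {a b : ℝ} (hab : a < b) (T : Set ℝ) (hT : IsCompact T)
    (h : T ⊆ Ioo a b) : ∃ c d, a < c ∧ c < d ∧ d < b ∧ T ⊆ Icc c d := by
  rcases T.eq_empty_or_nonempty with rfl | hne
  · exact ⟨a + (b - a) / 3, a + 2 * (b - a) / 3, by linarith, by linarith, by linarith, by simp⟩
  · have h1 := h (hT.sInf_mem hne)
    have h2 := h (hT.sSup_mem hne)
    have h3 : sInf T ≤ sSup T := csInf_le hT.bddBelow (hT.sSup_mem hne)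
    refine ⟨(a + sInf T) / 2, (sSup T + b) / 2, ?_, ?_, ?_, ?_⟩
    · linarith [h1.1]
    · linarith [h1.1, h2.2]
    · linarith [h2.2]
    · intro t ht
      have := csInf_le hT.bddBelow ht
      have := le_csSup hT.bddAbove ht
      constructor <;> linarith [h1.1, h2.2]

lemma exists_bump {c d : ℝ} (h : c < d) : ∃ η : ℝ → ℝ, ContDiff ℝ (⊤ : ℕ∞) η ∧
    (∀ t, η t ≠ 0 → t ∈ Icc c d) ∧ ∫ t, η t = 1 := by
  let b : ContDiffBump ((c + d) / 2) := ⟨(d - c) / 4, (d - c) / 2, by linarith, by linarith⟩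
  refine ⟨b.normed volume, b.contDiff_normed, ?_, b.integral_normed⟩
  intro t ht
  have : t ∈ Function.support (b.normed volume) := ht
  rw [b.support_normed_eq, Real.ball_eq_Ioo] at this
  have h1 : (c + d) / 2 - (d - c) / 2 < t := this.1
  have h2 : t < (c + d) / 2 + (d - c) / 2 := this.2
  constructor <;> linarith

lemma supp_box {n : ℕ} (c d : Fin n → ℝ) (f : EuclideanSpace ℝ (Fin n) → ℝ)
    (hs : ∀ x, f x ≠ 0 → ∀ i, x i ∈ Icc (c i) (d i)) :
    HasCompactSupport f ∧ tsupport f ⊆ {x | ∀ i, x i ∈ Icc (c i) (d i)} := by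
  have hK : IsCompact {x : EuclideanSpace ℝ (Fin n) | ∀ i, x i ∈ Icc (c i) (d i)} := by
    have h := isCompact_univ_pi (fun i => isCompact_Icc (a := c i) (b := d i))
    have h2 := (EuclideanSpace.equiv (Fin n) ℝ).toHomeomorph.isCompact_preimage.2 h
    convert h2 using 1
    ext x
    simp [mem_pi, forall_and]
    try rfl
  refine ⟨HasCompactSupport.intro hK ?_, closure_minimal (fun x hx => hs x hx) hK.isClosed⟩
  intro x hx
  by_contra h
  exact hx (hs x h)

/-- **Lemma 2.5.** A smooth function compactly supported in an open axis-parallel cube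
`Q` is a sum of coordinate partial derivatives of smooth functions compactly supported
in `Q` if and only if it has zero mean. -/
theorem divergence_decomposition_in_cube
    (n : ℕ) (hn : 1 ≤ n) (a : Fin n → ℝ) (s : ℝ) (hs : 0 < s)
    (Q : Set (EuclideanSpace ℝ (Fin n)))
    (hQ : Q = {x : EuclideanSpace ℝ (Fin n) | ∀ i, x i ∈ Ioo (a i) (a i + s)})
    (φ : EuclideanSpace ℝ (Fin n) → ℝ) (hφ : ContDiff ℝ (⊤ : ℕ∞) φ)
    (hφc : HasCompactSupport φ) (hφQ : tsupport φ ⊆ Q) :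
    (∃ ψ : Fin n → EuclideanSpace ℝ (Fin n) → ℝ,
        (∀ k, ContDiff ℝ (⊤ : ℕ∞) (ψ k) ∧ HasCompactSupport (ψ k) ∧ tsupport (ψ k) ⊆ Q) ∧
        ∀ x, φ x = ∑ k : Fin n, pderivIdx n k (ψ k) x) ↔
      ∫ x, φ x = 0 := by
  constructor
  · rintro ⟨ψ, hψ, hsum⟩
    simp_rw [hsum]
    rw [integral_finsetSum _ (fun k _ => (pderiv_integral k _ (hψ k).1 (hψ k).2.1).1)]
    exact Finset.sum_eq_zero (fun k _ => (pderiv_integral k _ (hψ k).1 (hψ k).2.1).2)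
  · intro hint
    have hbox : ∀ i, ∃ c d, a i < c ∧ c < d ∧ d < a i + s ∧
        Set.image (fun x : EuclideanSpace ℝ (Fin n) => x i) (tsupport φ) ⊆ Icc c d := by
      intro i
      apply compact_in_Ioo (by linarith)
      · exact IsCompact.image hφc (contDiff_coord i).continuous
      · rintro _ ⟨x, hx, rfl⟩
        have := hφQ hx
        rw [hQ] at this
        exact this i
    choose c d hac hcd hdb hT using hbox
    choose η hη hηs hη1 using fun i => exists_bump (hcd i)
    have hφs : ∀ x, φ x ≠ 0 → ∀ i, x i ∈ Icc (c i) (d i) := fun x hx i =>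
      hT i ⟨x, subset_tsupport φ hx, rfl⟩
    obtain ⟨ψ, f, g, hψ, hf, hfs, hsum, hfg, hg⟩ := key c d η hη hηs hη1 φ hφ hφs Finset.univ
    have hψ' : ∀ k, ContDiff ℝ (⊤ : ℕ∞) (ψ k) ∧ HasCompactSupport (ψ k) ∧
        tsupport (ψ k) ⊆ Q := by
      intro k
      obtain ⟨h1, h2⟩ := supp_box c d (ψ k) (hψ k).2
      refine ⟨(hψ k).1, h1, h2.trans ?_⟩
      rw [hQ]
      intro x hx i
      exact ⟨(hac i).trans_le (hx i).1, (hx i).2.trans_lt (hdb i)⟩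
    have hgc : ∀ x, g x = g 0 :=
      const_of_updc g (fun k x t => hg k (Finset.mem_univ k) x t)
    have hprod : ∫ x : EuclideanSpace ℝ (Fin n), ∏ i, η i (x i) = 1 := by
      have h1 := (PiLp.volume_preserving_ofLp (Fin n)).integral_comp
        (MeasurableEquiv.toLp 2 (Fin n → ℝ)).symm.measurableEmbedding
        (fun y : Fin n → ℝ => ∏ i, η i (y i))
      rw [integral_fintype_prod_volume_eq_prod] at h1
      simpa [hη1] using h1
    have hfint : ∫ x, f x = g 0 := by
      simp_rw [hfg, hgc]
      rw [integral_mul_const, hprod, one_mul]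
    have hfI : Integrable f :=
      hf.continuous.integrable_of_hasCompactSupport (supp_box c d f hfs).1
    have hφint : ∫ x, φ x = g 0 := by
      simp_rw [hsum]
      rw [integral_add (integrable_finsetSum _
          (fun k _ => (pderiv_integral k _ (hψ' k).1 (hψ' k).2.1).1)) hfI,
        integral_finsetSum _ (fun k _ => (pderiv_integral k _ (hψ' k).1 (hψ' k).2.1).1),
        Finset.sum_eq_zero (fun k _ => (pderiv_integral k _ (hψ' k).1 (hψ' k).2.1).2),
        hfint, zero_add]
    refine ⟨ψ, hψ', fun x => ?_⟩
    rw [hsum x, hfg x, hgc x, ← hφint, hint, mul_zero, add_zero]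
end
end
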